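/- arXiv:2108.02857 — 4 statements merged into one kernel-verified Lean document; each statement's English description precedes it below -/
import Mathlib

section
/- For every θ > 0 and every T > 0, the second moment of F_T := T^{-1/2} ∫₀^T X₁(u)X₂(u) du satisfies |E[F_T²] − 1/(4θ³)| ≤ ((7 + 8θ)/(16θ⁴)) · (1/T). In particular, E[F_T²] → 1/(4θ³) as T → ∞. -/
open MeasureTheory ProbabilityTheory Real Filter Finset
open scoped Topology ENNReal NNReal

noncomputable section

/-- Kolmogorov distance between two Borel measures on `ℝ`. -/
def dKol (μ ν : Measure ℝ) : ℝ :=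
  ⨆ z : ℝ, |(μ (Set.Iic z)).toReal - (ν (Set.Iic z)).toReal|

/-- `X 0, X 1 : ℝ → Ω → ℝ` is a pair of independent centered Gaussian processes,
started at `0`, with almost surely continuous paths on `[0,∞)` and the
Ornstein–Uhlenbeck covariance `E[Xᵢ(s)Xᵢ(t)] = (e^{−θ|t−s|} − e^{−θ(t+s)})/(2θ)`. -/
structure IsOUPair {Ω : Type} [MeasureSpace Ω] (θ : ℝ) (X : Fin 2 → ℝ → Ω → ℝ) : Prop where
  meas : ∀ i t, Measurable (X i t)
  gaussian : ∀ (i : Fin 2) (n : ℕ) (t : Fin n → ℝ) (c : Fin n → ℝ), (∀ j, 0 ≤ t j) →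
      ∃ v : NNReal, Measure.map (fun ω => ∑ j, c j * X i (t j) ω) ℙ = gaussianReal 0 v
  indep : IndepFun (fun ω t => X 0 t ω) (fun ω t => X 1 t ω) ℙ
  cont : ∀ᵐ ω ∂(ℙ : Measure Ω), ∀ i, ContinuousOn (fun t => X i t ω) (Set.Ici 0)
  init : ∀ i ω, X i 0 ω = 0
  cov : ∀ (i : Fin 2) (s t : ℝ), 0 ≤ s → 0 ≤ t →
      ∫ ω, X i s ω * X i t ω ∂ℙ
        = (Real.exp (-θ * |t - s|) - Real.exp (-θ * (t + s))) / (2 * θ)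

variable {Ω : Type} [MeasureSpace Ω]

/-- `F_T := T^{-1/2} ∫₀^T X₁(u) X₂(u) du`. -/
def ouF (X : Fin 2 → ℝ → Ω → ℝ) (T : ℝ) (ω : Ω) : ℝ :=
  (1 / Real.sqrt T) * ∫ u in (0:ℝ)..T, X 0 u ω * X 1 u ω

/-- `X̄ᵢ(T) := T^{-1} ∫₀^T Xᵢ(u) du`. -/
def ouXbar (X : Fin 2 → ℝ → Ω → ℝ) (i : Fin 2) (T : ℝ) (ω : Ω) : ℝ :=
  (1 / T) * ∫ u in (0:ℝ)..T, X i u ω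

/-- `Y_{ij}(T) := ∫₀^T Xᵢ(u)Xⱼ(u) du − T·X̄ᵢ(T)·X̄ⱼ(T)`. -/
def ouY (X : Fin 2 → ℝ → Ω → ℝ) (i j : Fin 2) (T : ℝ) (ω : Ω) : ℝ :=
  (∫ u in (0:ℝ)..T, X i u ω * X j u ω) - T * ouXbar X i T ω * ouXbar X j T ω

/-- Yule's nonsense correlation `ρ(T)`. -/
def ouRho (X : Fin 2 → ℝ → Ω → ℝ) (T : ℝ) (ω : Ω) : ℝ :=
  ouY X 0 1 T ω / Real.sqrt (ouY X 0 0 T ω * ouY X 1 1 T ω)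

/-- `A(n) := (√Tₙ/n) Σ_{k<n} X₁(kΔ)X₂(kΔ)` with `Tₙ = nΔ`. -/
def ouA (X : Fin 2 → ℝ → Ω → ℝ) (n : ℕ) (Δ : ℝ) (ω : Ω) : ℝ :=
  (Real.sqrt (n * Δ) / n) * ∑ k ∈ Finset.range n, X 0 (k * Δ) ω * X 1 (k * Δ) ω

/-- `X̃ᵢ(n) := n^{-1} Σ_{k<n} Xᵢ(kΔ)`. -/
def ouXtilde (X : Fin 2 → ℝ → Ω → ℝ) (i : Fin 2) (n : ℕ) (Δ : ℝ) (ω : Ω) : ℝ :=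
  (1 / n) * ∑ k ∈ Finset.range n, X i (k * Δ) ω

/-- `Ỹ_{ij}(n) := Δ Σ_{k<n} Xᵢ(kΔ)Xⱼ(kΔ) − Tₙ·X̃ᵢ(n)·X̃ⱼ(n)` with `Tₙ = nΔ`. -/
def ouYtilde (X : Fin 2 → ℝ → Ω → ℝ) (i j : Fin 2) (n : ℕ) (Δ : ℝ) (ω : Ω) : ℝ :=
  Δ * ∑ k ∈ Finset.range n, X i (k * Δ) ω * X j (k * Δ) ω
    - (n * Δ) * ouXtilde X i n Δ ω * ouXtilde X j n Δ ω

/-- Yule's discrete nonsense correlation `ρ̃(n)`. -/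
def ouRhoTilde (X : Fin 2 → ℝ → Ω → ℝ) (n : ℕ) (Δ : ℝ) (ω : Ω) : ℝ :=
  ouYtilde X 0 1 n Δ ω / Real.sqrt (ouYtilde X 0 0 n Δ ω * ouYtilde X 1 1 n Δ ω)

lemma int_aux (θ : ℝ) (hθ : 0 < θ) (T t : ℝ) (h0 : 0 ≤ t) (hT : t ≤ T) :
    ∫ s in (0:ℝ)..T, ((Real.exp (-θ * |t - s|) - Real.exp (-θ * (t + s))) / (2 * θ)) ^ 2
     = 1/(8*θ^3) * (2 - (4*θ*t+2) * Real.exp (-2*θ*t) - Real.exp (-2*θ*T) *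
        (Real.exp (2*θ*t) - 2 + Real.exp (-2*θ*t))) := by
  have hc : Continuous fun s : ℝ =>
      ((Real.exp (-θ * |t - s|) - Real.exp (-θ * (t + s))) / (2 * θ)) ^ 2 := by fun_prop
  rw [← intervalIntegral.integral_add_adjacent_intervals (b := t)
    (hc.intervalIntegrable _ _) (hc.intervalIntegrable _ _)]
  have e1 : ∫ s in (0:ℝ)..t, ((Real.exp (-θ * |t - s|) - Real.exp (-θ * (t + s))) / (2 * θ)) ^ 2
      = Real.exp (-2*θ*t) / (4*θ^2) * ((Real.exp (2*θ*t) - Real.exp (-2*θ*t))/(2*θ) - 2*t) := by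
    rw [intervalIntegral.integral_eq_sub_of_hasDerivAt
      (f := fun s => Real.exp (-2*θ*t) / (4*θ^2) *
        ((Real.exp (2*θ*s) - Real.exp (-2*θ*s))/(2*θ) - 2*s)) ?_ (hc.intervalIntegrable _ _)]
    · simp
    · intro s hs
      rw [Set.uIcc_of_le h0] at hs
      have h1 : HasDerivAt (fun t : ℝ => Real.exp (-2*θ*t)) (Real.exp (-2*θ*s) * (-2*θ*1)) s :=
        ((hasDerivAt_id s).const_mul (-2*θ)).exp
      have h2 : HasDerivAt (fun t : ℝ => Real.exp (2*θ*t)) (Real.exp (2*θ*s) * (2*θ*1)) s :=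
        ((hasDerivAt_id s).const_mul (2*θ)).exp
      have h3 : HasDerivAt (fun t : ℝ => 2*t) (2*1) s := ((hasDerivAt_id s).const_mul 2)
      refine HasDerivAt.congr_deriv ((((h2.sub h1).div_const (2*θ)).sub h3).const_mul (Real.exp (-2*θ*t) / (4*θ^2))) ?_
      symm
      rw [abs_of_nonneg (by linarith [hs.2])]
      have a1 : Real.exp (-θ * (t - s)) = Real.exp (-θ*t) * Real.exp (θ*s) := by
        rw [← Real.exp_add]; congr 1; ring
      have a2 : Real.exp (-θ * (t + s)) = Real.exp (-θ*t) * (Real.exp (θ*s))⁻¹ := by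
        rw [← Real.exp_neg, ← Real.exp_add]; congr 1; ring
      have a3 : Real.exp (-2*θ*t) = Real.exp (-θ*t) ^ 2 := by
        rw [← Real.exp_nat_mul]; congr 1; push_cast; ring
      have a4 : Real.exp (2*θ*s) = Real.exp (θ*s) ^ 2 := by
        rw [← Real.exp_nat_mul]; congr 1; push_cast; ring
      have a5 : Real.exp (-2*θ*s) = ((Real.exp (θ*s))⁻¹) ^ 2 := by
        rw [← Real.exp_neg, ← Real.exp_nat_mul]; congr 1; push_cast; ring
      rw [a1, a2, a3, a4, a5]
      have := Real.exp_pos (θ*s)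
      field_simp
      ring
  have e2 : ∫ s in t..T, ((Real.exp (-θ * |t - s|) - Real.exp (-θ * (t + s))) / (2 * θ)) ^ 2
      = (Real.exp (2*θ*t) - 2 + Real.exp (-2*θ*t)) / (4*θ^2) *
        ((Real.exp (-2*θ*t) - Real.exp (-2*θ*T))/(2*θ)) := by
    rw [intervalIntegral.integral_eq_sub_of_hasDerivAt
      (f := fun s => (Real.exp (2*θ*t) - 2 + Real.exp (-2*θ*t)) / (4*θ^2) *
        ((0 - Real.exp (-2*θ*s))/(2*θ))) ?_ (hc.intervalIntegrable _ _)]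
    · ring
    · intro s hs
      rw [Set.uIcc_of_le hT] at hs
      have h1 : HasDerivAt (fun t : ℝ => Real.exp (-2*θ*t)) (Real.exp (-2*θ*s) * (-2*θ*1)) s :=
        ((hasDerivAt_id s).const_mul (-2*θ)).exp
      refine HasDerivAt.congr_deriv (((h1.const_sub 0).div_const (2*θ)).const_mul
        ((Real.exp (2*θ*t) - 2 + Real.exp (-2*θ*t)) / (4*θ^2))) ?_
      symm
      rw [abs_of_nonpos (by linarith [hs.1])]
      have a1 : Real.exp (-θ * -(t - s)) = Real.exp (-θ*s) * Real.exp (θ*t) := by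
        rw [← Real.exp_add]; congr 1; ring
      have a2 : Real.exp (-θ * (t + s)) = Real.exp (-θ*s) * (Real.exp (θ*t))⁻¹ := by
        rw [← Real.exp_neg, ← Real.exp_add]; congr 1; ring
      have a3 : Real.exp (-2*θ*s) = Real.exp (-θ*s) ^ 2 := by
        rw [← Real.exp_nat_mul]; congr 1; push_cast; ring
      have a4 : Real.exp (2*θ*t) = Real.exp (θ*t) ^ 2 := by
        rw [← Real.exp_nat_mul]; congr 1; push_cast; ring
      have a5 : Real.exp (-2*θ*t) = ((Real.exp (θ*t))⁻¹) ^ 2 := by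
        rw [← Real.exp_neg, ← Real.exp_nat_mul]; congr 1; push_cast; ring
      rw [a1, a2, a3, a4, a5]
      have := Real.exp_pos (θ*t)
      field_simp
      ring
  rw [e1, e2]
  have a5 : Real.exp (2*θ*t) = (Real.exp (-2*θ*t))⁻¹ := by
    rw [← Real.exp_neg]; congr 1; ring
  rw [a5]
  have := Real.exp_pos (-2*θ*t)
  field_simp
  ring

lemma int_aux2 (θ : ℝ) (hθ : 0 < θ) (T : ℝ) :
    ∫ t in (0:ℝ)..T, 1/(8*θ^3) * (2 - (4*θ*t+2) * Real.exp (-2*θ*t) - Real.exp (-2*θ*T) *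
        (Real.exp (2*θ*t) - 2 + Real.exp (-2*θ*t)))
     = T/(4*θ^3) - 1/(8*θ^3) * (5/(2*θ) - 4*T*Real.exp (-2*θ*T) - 2*Real.exp (-2*θ*T)/θ
        - Real.exp (-2*θ*T)^2/(2*θ)) := by
  rw [intervalIntegral.integral_eq_sub_of_hasDerivAt
      (f := fun t => 1/(8*θ^3) * (2*t + (2*t+2/θ) * Real.exp (-2*θ*t) - Real.exp (-2*θ*T) *
        ((Real.exp (2*θ*t) - Real.exp (-2*θ*t))/(2*θ) - 2*t)))]
  · have : Real.exp (2*θ*T) = (Real.exp (-2*θ*T))⁻¹ := by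
      rw [← Real.exp_neg]; congr 1; ring
    have hp := Real.exp_pos (-2*θ*T)
    simp only [this]
    simp
    field_simp
    ring
  · intro t _
    have h1 : HasDerivAt (fun t : ℝ => Real.exp (-2*θ*t)) (Real.exp (-2*θ*t) * (-2*θ*1)) t :=
      ((hasDerivAt_id t).const_mul (-2*θ)).exp
    have h2 : HasDerivAt (fun t : ℝ => Real.exp (2*θ*t)) (Real.exp (2*θ*t) * (2*θ*1)) t :=
      ((hasDerivAt_id t).const_mul (2*θ)).exp
    have h3 : HasDerivAt (fun t : ℝ => 2*t) (2*1) t := ((hasDerivAt_id t).const_mul 2)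
    refine HasDerivAt.congr_deriv (((h3.add ((h3.add_const (2/θ)).mul h1)).sub
      ((((h2.sub h1).div_const (2*θ)).sub h3).const_mul (Real.exp (-2*θ*T)))).const_mul (1/(8*θ^3))) ?_
    symm
    have : θ * (2/θ) = 2 := by field_simp
    simp only [mul_one]
    have e : (Real.exp (2*θ*t) * (2*θ) - Real.exp (-2*θ*t) * (-2*θ))/(2*θ)
      = Real.exp (2*θ*t) + Real.exp (-2*θ*t) := by field_simp; ring
    rw [e]
    linear_combination (-(1/(8*θ^3)) * (-2) * Real.exp (-2*θ*t)) * this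
  · apply Continuous.intervalIntegrable; fun_prop

lemma bound_aux (θ : ℝ) (hθ : 0 < θ) (T : ℝ) (hT : 0 < T) :
   |1/T * (T/(4*θ^3) - 1/(8*θ^3) * (5/(2*θ) - 4*T*Real.exp (-2*θ*T) - 2*Real.exp (-2*θ*T)/θ
        - Real.exp (-2*θ*T)^2/(2*θ))) - 1/(4*θ^3)| ≤ ((7 + 8 * θ) / (16 * θ ^ 4)) * (1 / T) := by
  have hp := Real.exp_pos (-2*θ*T)
  have h1 : (2*θ*T+1) * Real.exp (-2*θ*T) ≤ 1 := by
    have := Real.add_one_le_exp (2*θ*T)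
    calc _ ≤ Real.exp (2*θ*T) * Real.exp (-2*θ*T) := by gcongr
      _ = 1 := by rw [← Real.exp_add]; simp
  set a := Real.exp (-2*θ*T)
  have ha : a ≤ 1 := by nlinarith [mul_pos hθ hT, mul_pos (mul_pos hθ hT) hp]
  have : 1/T * (T/(4*θ^3) - 1/(8*θ^3) * (5/(2*θ) - 4*T*a - 2*a/θ
        - a^2/(2*θ))) - 1/(4*θ^3) = - ((5 - 8*θ*T*a - 4*a - a^2) / (16*θ^4)) * (1/T) := by
    field_simp
    ring
  rw [this, abs_mul, abs_of_pos (show 0 < 1/T by positivity), abs_neg, abs_div,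
    abs_of_pos (show 0 < 16*θ^4 by positivity)]
  gcongr
  rw [abs_le]
  have := mul_pos (mul_pos hθ hT) hp
  constructor <;> nlinarith

/-- jointly measurable, continuous version -/
lemma exists_version {θ : ℝ} {X : Fin 2 → ℝ → Ω → ℝ} (hX : IsOUPair θ X) :
    ∃ Y : Fin 2 → ℝ → Ω → ℝ, (∀ i, Measurable fun p : ℝ × Ω => Y i p.1 p.2) ∧
      ∀ᵐ ω ∂(ℙ : Measure Ω), ∀ i t, 0 ≤ t → Y i t ω = X i t ω := by
  obtain ⟨N, hN, hNm, hN0⟩ := exists_measurable_superset_of_null (ae_iff.1 hX.cont)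
  refine ⟨fun i t => Nᶜ.indicator (X i (max t 0)), fun i => ?_, ?_⟩
  · refine measurable_uncurry_of_continuous_of_measurable (u := fun t ω => Nᶜ.indicator (X i (max t 0)) ω) ?_ ?_
    · intro ω
      by_cases h : ω ∈ N
      · simp [h, continuous_const]
      · have : ∀ i, ContinuousOn (fun t => X i t ω) (Set.Ici 0) := by
          by_contra h'; exact h (hN h')
        simp only [Set.indicator, Set.mem_compl_iff, h, not_false_eq_true, if_true]
        exact (this i).comp_continuous (by fun_prop) (by simp)
    · intro t
      exact (hX.meas i _).indicator hNm.compl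
  · have : ∀ᵐ ω ∂(ℙ : Measure Ω), ω ∉ N := by rw [ae_iff]; simpa using hN0
    filter_upwards [this] with ω h i t ht
    simp [h, ht]

lemma memLp_aux {θ : ℝ} {X : Fin 2 → ℝ → Ω → ℝ} [IsProbabilityMeasure (ℙ : Measure Ω)]
    (hX : IsOUPair θ X) (i : Fin 2) {t : ℝ} (ht : 0 ≤ t) :
    MemLp (X i t) 2 ℙ := by
  obtain ⟨v, hv⟩ := hX.gaussian i 1 (fun _ => t) (fun _ => 1) (fun _ => ht)
  simp at hv
  have h := memLp_id_gaussianReal (μ := 0) (v := v) 2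
  change Measure.map (X i t) ℙ = _ at hv
  rw [← hv] at h
  simpa using (memLp_map_measure_iff (by fun_prop) (hX.meas i t).aemeasurable).1 h

lemma indep_aux {θ : ℝ} {X : Fin 2 → ℝ → Ω → ℝ} 
    (hX : IsOUPair θ X) (s t : ℝ) :
    IndepFun (fun ω => X 0 s ω * X 0 t ω) (fun ω => X 1 s ω * X 1 t ω) ℙ :=
  hX.indep.comp (φ := fun f : ℝ → ℝ => f s * f t) (ψ := fun f : ℝ → ℝ => f s * f t)
    (by fun_prop) (by fun_prop)

lemma second_moment {θ : ℝ} {X : Fin 2 → ℝ → Ω → ℝ} [IsProbabilityMeasure (ℙ : Measure Ω)]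
    (hX : IsOUPair θ X) (T : ℝ) (hT : 0 < T) :
    ∫ ω, (∫ u in (0:ℝ)..T, X 0 u ω * X 1 u ω) ^ 2 ∂ℙ
     = ∫ t in (0:ℝ)..T, ∫ s in (0:ℝ)..T,
      ((Real.exp (-θ * |t - s|) - Real.exp (-θ * (t + s))) / (2 * θ)) ^ 2 := by
  obtain ⟨Y, hYm, hYX⟩ := exists_version hX
  set ν : Measure ℝ := volume.restrict (Set.Ioc 0 T) with hν
  have hpos : ∀ᵐ p ∂(ν.prod ν), 0 ≤ p.1 ∧ 0 ≤ p.2 := by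
    rw [hν, Measure.prod_restrict]
    refine (ae_restrict_mem (measurableSet_Ioc.prod measurableSet_Ioc)).mono ?_
    rintro p ⟨h1, h2⟩
    exact ⟨h1.1.le, h2.1.le⟩
  let f : (ℝ × ℝ) → Ω → ℝ := fun p ω =>
    (Y 0 p.1 ω * Y 1 p.1 ω) * (Y 0 p.2 ω * Y 1 p.2 ω)
  have hfm : Measurable (Function.uncurry f) := by
    have m1 : ∀ i, Measurable fun q : (ℝ × ℝ) × Ω => Y i q.1.1 q.2 := fun i =>
      (hYm i).comp (g := fun p : ℝ × Ω => Y i p.1 p.2)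
        (f := fun q : (ℝ × ℝ) × Ω => (q.1.1, q.2)) (by fun_prop)
    have m2 : ∀ i, Measurable fun q : (ℝ × ℝ) × Ω => Y i q.1.2 q.2 := fun i =>
      (hYm i).comp (g := fun p : ℝ × Ω => Y i p.1 p.2)
        (f := fun q : (ℝ × ℝ) × Ω => (q.1.2, q.2)) (by fun_prop)
    exact ((m1 0).mul (m1 1)).mul ((m2 0).mul (m2 1))
  have hfe : ∀ s t : ℝ, 0 ≤ s → 0 ≤ t → f (s, t) =ᵐ[ℙ]
      fun ω => (X 0 s ω * X 0 t ω) * (X 1 s ω * X 1 t ω) := by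
    intro s t hs ht
    filter_upwards [hYX] with ω h
    simp only [f, h _ _ hs, h _ _ ht]
    ring
  have hi : ∀ i (s t : ℝ), 0 ≤ s → 0 ≤ t → Integrable (fun ω => X i s ω * X i t ω) ℙ :=
    fun i s t hs ht => (memLp_aux hX i hs).integrable_mul (memLp_aux hX i ht)
  have hfi : ∀ s t : ℝ, 0 ≤ s → 0 ≤ t → Integrable (f (s, t)) ℙ := by
    intro s t hs ht
    rw [integrable_congr (hfe s t hs ht)]
    exact (indep_aux hX s t).integrable_mul (hi 0 s t hs ht) (hi 1 s t hs ht)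
  have hfI : ∀ s t : ℝ, 0 ≤ s → 0 ≤ t → ∫ ω, f (s, t) ω ∂ℙ =
      ((Real.exp (-θ * |s - t|) - Real.exp (-θ * (s + t))) / (2 * θ)) ^ 2 := by
    intro s t hs ht
    rw [integral_congr_ae (hfe s t hs ht)]
    have := (indep_aux hX s t).integral_fun_mul_eq_mul_integral
      (hi 0 s t hs ht).aestronglyMeasurable (hi 1 s t hs ht).aestronglyMeasurable
    rw [this, hX.cov 0 s t hs ht, hX.cov 1 s t hs ht, abs_sub_comm, add_comm, sq]
  have habs : ∀ i (s t : ℝ), 0 ≤ s → 0 ≤ t → ∫ ω, |X i s ω * X i t ω| ∂ℙ ≤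
      (1 / 2) * ((Real.exp (-θ * |s - s|) - Real.exp (-θ * (s + s))) / (2 * θ)) +
      (1 / 2) * ((Real.exp (-θ * |t - t|) - Real.exp (-θ * (t + t))) / (2 * θ)) := by
    intro i s t hs ht
    rw [← hX.cov i s s hs hs, ← hX.cov i t t ht ht, ← integral_const_mul, ← integral_const_mul,
      ← integral_add ((hi i s s hs hs).const_mul _) ((hi i t t ht ht).const_mul _)]
    refine integral_mono (hi i s t hs ht).abs
      (((hi i s s hs hs).const_mul _).add ((hi i t t ht ht).const_mul _)) ?_
    intro ω
    simp only [abs_mul]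
    nlinarith [sq_nonneg (|X i s ω| - |X i t ω|), abs_mul_abs_self (X i s ω),
      abs_mul_abs_self (X i t ω)]
  let B : ℝ × ℝ → ℝ := fun p => ((1 / 2) * ((Real.exp (-θ * |p.1 - p.1|) - Real.exp (-θ * (p.1 + p.1))) / (2 * θ)) +
      (1 / 2) * ((Real.exp (-θ * |p.2 - p.2|) - Real.exp (-θ * (p.2 + p.2))) / (2 * θ))) ^ 2
  have hcint : ∀ g : ℝ × ℝ → ℝ, Continuous g → Integrable g (ν.prod ν) := by
    intro g hg
    rw [hν, Measure.prod_restrict]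
    exact (hg.continuousOn.integrableOn_compact (isCompact_Icc.prod isCompact_Icc)).mono_set
      (Set.prod_mono Set.Ioc_subset_Icc_self Set.Ioc_subset_Icc_self)
  have hB : Integrable B (ν.prod ν) := hcint B (by fun_prop)
  have hfint : Integrable (Function.uncurry f) ((ν.prod ν).prod ℙ) := by
    rw [integrable_prod_iff hfm.aestronglyMeasurable]
    constructor
    · filter_upwards [hpos] with p hp
      exact hfi p.1 p.2 hp.1 hp.2
    · refine hB.mono' hfm.norm.aestronglyMeasurable.integral_prod_right' ?_
      filter_upwards [hpos] with p hp
      rw [Real.norm_of_nonneg (integral_nonneg fun _ => norm_nonneg _)]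
      have e : (∫ ω, ‖Function.uncurry f (p, ω)‖ ∂ℙ) =
          ∫ ω, |X 0 p.1 ω * X 0 p.2 ω| * |X 1 p.1 ω * X 1 p.2 ω| ∂ℙ := by
        refine integral_congr_ae ?_
        filter_upwards [hfe p.1 p.2 hp.1 hp.2] with ω h
        change ‖f (p.1, p.2) ω‖ = _
        rw [h, Real.norm_eq_abs, abs_mul]
      rw [e]
      have hin : IndepFun (fun ω => |X 0 p.1 ω * X 0 p.2 ω|) (fun ω => |X 1 p.1 ω * X 1 p.2 ω|) ℙ :=
        (indep_aux hX p.1 p.2).comp (φ := fun x : ℝ => |x|) (ψ := fun x : ℝ => |x|)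
          (by fun_prop) (by fun_prop)
      rw [hin.integral_fun_mul_eq_mul_integral
        (hi 0 _ _ hp.1 hp.2).abs.aestronglyMeasurable (hi 1 _ _ hp.1 hp.2).abs.aestronglyMeasurable]
      have h0 := habs 0 _ _ hp.1 hp.2
      have h1 := habs 1 _ _ hp.1 hp.2
      simp only [B]
      rw [sq]
      exact mul_le_mul h0 h1 (integral_nonneg fun _ => abs_nonneg _)
        ((integral_nonneg fun _ => abs_nonneg _).trans h0)
  calc _ = ∫ ω, ∫ p, f p ω ∂(ν.prod ν) ∂ℙ := by
        refine integral_congr_ae ?_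
        filter_upwards [hYX] with ω h
        simp only [f]
        rw [integral_prod_mul (fun t => Y 0 t ω * Y 1 t ω) (fun t => Y 0 t ω * Y 1 t ω), ← sq,
          intervalIntegral.integral_of_le hT.le]
        congr 1
        refine setIntegral_congr_fun measurableSet_Ioc ?_
        intro u hu
        simp only [h _ _ hu.1.le]
    _ = ∫ p, ∫ ω, f p ω ∂ℙ ∂(ν.prod ν) := (integral_integral_swap hfint).symm
    _ = ∫ p, ((Real.exp (-θ * |p.1 - p.2|) - Real.exp (-θ * (p.1 + p.2))) / (2 * θ)) ^ 2
          ∂(ν.prod ν) := by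
        refine integral_congr_ae ?_
        filter_upwards [hpos] with p hp
        exact hfI p.1 p.2 hp.1 hp.2
    _ = _ := by
        rw [integral_prod _ (hcint _ (by fun_prop))]
        simp only [intervalIntegral.integral_of_le hT.le]
        rfl

lemma second_moment_F {θ : ℝ} (hθ : 0 < θ) {X : Fin 2 → ℝ → Ω → ℝ}
    [IsProbabilityMeasure (ℙ : Measure Ω)] (hX : IsOUPair θ X) (T : ℝ) (hT : 0 < T) :
    |(∫ ω, (ouF X T ω) ^ 2 ∂ℙ) - 1 / (4 * θ ^ 3)|
        ≤ ((7 + 8 * θ) / (16 * θ ^ 4)) * (1 / T) := by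
  have e : (∫ ω, (ouF X T ω) ^ 2 ∂ℙ) = 1 / T * ∫ t in (0:ℝ)..T, ∫ s in (0:ℝ)..T,
      ((Real.exp (-θ * |t - s|) - Real.exp (-θ * (t + s))) / (2 * θ)) ^ 2 := by
    rw [← second_moment hX T hT, ← integral_const_mul]
    congr 1
    ext ω
    rw [ouF, mul_pow, div_pow, Real.sq_sqrt hT.le, one_pow]
  have e2 : (∫ t in (0:ℝ)..T, ∫ s in (0:ℝ)..T,
      ((Real.exp (-θ * |t - s|) - Real.exp (-θ * (t + s))) / (2 * θ)) ^ 2) = 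
      ∫ t in (0:ℝ)..T, 1/(8*θ^3) * (2 - (4*θ*t+2) * Real.exp (-2*θ*t) - Real.exp (-2*θ*T) *
        (Real.exp (2*θ*t) - 2 + Real.exp (-2*θ*t))) := by
    refine intervalIntegral.integral_congr ?_
    intro t ht
    rw [Set.uIcc_of_le hT.le] at ht
    exact int_aux θ hθ T t ht.1 ht.2
  rw [e, e2, int_aux2 θ hθ T]
  exact bound_aux θ hθ T hT

/-- `|E[F_T²] − 1/(4θ³)| ≤ ((7+8θ)/(16θ⁴))·(1/T)` for all `T > 0`;
in particular `E[F_T²] → 1/(4θ³)` as `T → ∞`. -/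
theorem stmt_0 (θ : ℝ) (hθ : 0 < θ) [IsProbabilityMeasure (ℙ : Measure Ω)]
    (X : Fin 2 → ℝ → Ω → ℝ) (hX : IsOUPair θ X) :
    (∀ T : ℝ, 0 < T →
      |(∫ ω, (ouF X T ω) ^ 2 ∂ℙ) - 1 / (4 * θ ^ 3)|
        ≤ ((7 + 8 * θ) / (16 * θ ^ 4)) * (1 / T)) ∧
    Tendsto (fun T : ℝ => ∫ ω, (ouF X T ω) ^ 2 ∂ℙ) atTop (𝓝 (1 / (4 * θ ^ 3))) := by
  refine ⟨fun T hT => second_moment_F hθ hX T hT, ?_⟩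
  rw [tendsto_iff_norm_sub_tendsto_zero]
  have h : Tendsto (fun T : ℝ => ((7 + 8 * θ) / (16 * θ ^ 4)) * (1 / T)) atTop (𝓝 0) := by
    simpa using (tendsto_inv_atTop_zero (𝕜 := ℝ)).const_mul ((7 + 8 * θ) / (16 * θ ^ 4))
  refine squeeze_zero' (Eventually.of_forall fun _ => norm_nonneg _) ?_ h
  filter_upwards [eventually_gt_atTop 0] with T hT
  exact second_moment_F hθ hX T hT

end
end

section
/- For every θ > 0 and every T ≥ 1, d_Kol(2θ^{3/2} F_T, N(0,1)) ≤ c(θ)/√T, where c(θ) := √((2 + 7/(4θ))² + 27/(4θ)). Consequently, F_T converges in distribution to N(0, 1/(4θ³)) as T → ∞. -/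
open MeasureTheory ProbabilityTheory Real Filter Finset
open scoped Topology ENNReal NNReal

noncomputable section

variable {Ω : Type} [MeasureSpace Ω]

lemma gaussian_moment2 (v : ℝ≥0) : ∫ x, x ^ 2 ∂(gaussianReal 0 v) = v := by
  have h := variance_fun_id_gaussianReal (μ := 0) (v := v)
  rw [variance_eq_integral (by fun_prop)] at h
  simpa [integral_id_gaussianReal] using h

lemma gaussian_moment4 (v : ℝ≥0) : ∫ x, x ^ 4 ∂(gaussianReal 0 v) = 3 * (v : ℝ) ^ 2 := by
  have h := iteratedDeriv_mgf_zero (X := fun x : ℝ => x) (μ := gaussianReal 0 v)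
    (by simp) 4
  have h' : ∫ x, x ^ 4 ∂(gaussianReal 0 v)
      = iteratedDeriv 4 (mgf (fun x : ℝ => x) (gaussianReal 0 v)) 0 := by
    rw [h]; rfl
  rw [h', mgf_fun_id_gaussianReal]
  set w : ℝ := (v : ℝ)
  have e0 : (fun t : ℝ => rexp (0 * t + w * t ^ 2 / 2)) = fun t => rexp (w * t ^ 2 / 2) := by
    ext t; simp
  have he (t : ℝ) : HasDerivAt (fun t => rexp (w * t ^ 2 / 2)) (w * t * rexp (w * t ^ 2 / 2)) t := by
    have := (((hasDerivAt_pow 2 t).const_mul w).div_const 2).exp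
    convert this using 1
    push_cast; ring
  have hp (p p' : ℝ → ℝ) (h : ∀ t, HasDerivAt p (p' t) t) :
      deriv (fun t => p t * rexp (w * t ^ 2 / 2))
        = fun t => (p' t + p t * (w * t)) * rexp (w * t ^ 2 / 2) := by
    ext t
    have := ((h t).fun_mul (he t)).deriv
    rw [this]; ring
  rw [e0]
  rw [iteratedDeriv_succ', iteratedDeriv_succ', iteratedDeriv_succ', iteratedDeriv_succ',
    iteratedDeriv_zero]
  have d1 : deriv (fun t => rexp (w * t ^ 2 / 2)) = fun t => (w * t) * rexp (w * t ^ 2 / 2) := by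
    ext t; exact (he t).deriv
  have hd2 (t : ℝ) : HasDerivAt (fun t => w + w * t * (w * t)) (2 * w ^ 2 * t) t := by
    have := ((hasDerivAt_pow 2 t).const_mul (w ^ 2)).const_add w
    rw [show (fun t => w + w * t * (w * t)) = fun x => w + w ^ 2 * x ^ 2 from
      funext fun t => by ring]
    refine this.congr_deriv ?_
    norm_num; ring
  have hd3 (t : ℝ) : HasDerivAt (fun t => 2 * w ^ 2 * t + (w + w * t * (w * t)) * (w * t))
      (3 * w ^ 2 + 3 * w ^ 3 * t ^ 2) t := by
    have := ((hasDerivAt_id t).const_mul (3 * w ^ 2)).fun_add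
      ((hasDerivAt_pow 3 t).const_mul (w ^ 3))
    rw [show (fun t => 2 * w ^ 2 * t + (w + w * t * (w * t)) * (w * t))
      = fun y => 3 * w ^ 2 * id y + w ^ 3 * y ^ 3 from
      funext fun t => by simp only [id]; ring]
    refine this.congr_deriv ?_
    norm_num; ring
  rw [d1, hp (fun t => w * t) (fun _ => w) (fun t => by simpa using (hasDerivAt_id t).const_mul w),
    hp (fun t => w + w * t * (w * t)) (fun t => 2 * w ^ 2 * t) hd2,
    hp (fun t => 2 * w ^ 2 * t + (w + w * t * (w * t)) * (w * t))
      (fun t => 3 * w ^ 2 + 3 * w ^ 3 * t ^ 2) hd3]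
  simp

lemma gaussian_std_interval {a b M : ℝ} (hab : a ≤ b)
    (hM : ∀ x ∈ Set.Ioc a b, gaussianPDFReal 0 1 x ≤ M) :
    ((gaussianReal 0 1) (Set.Iic b)).toReal - ((gaussianReal 0 1) (Set.Iic a)).toReal
      ≤ M * (b - a) := by
  have h1 : ((gaussianReal 0 1) (Set.Iic b)).toReal - ((gaussianReal 0 1) (Set.Iic a)).toReal
      = ((gaussianReal 0 1) (Set.Ioc a b)).toReal := by
    rw [← Set.Iic_union_Ioc_eq_Iic hab, measure_union (Set.Iic_disjoint_Ioc le_rfl) measurableSet_Ioc,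
      ENNReal.toReal_add (by finiteness) (by finiteness)]
    ring
  rw [h1, gaussianReal_apply_eq_integral _ one_ne_zero, ENNReal.toReal_ofReal
    (integral_nonneg fun x => gaussianPDFReal_nonneg _ _ _)]
  have := norm_setIntegral_le_of_norm_le_const (μ := volume) (s := Set.Ioc a b)
    (f := gaussianPDFReal 0 1) (C := M) (by simp) (fun x hx => by
      rw [Real.norm_of_nonneg (gaussianPDFReal_nonneg _ _ _)]; exact hM x hx)
  refine (le_abs_self _).trans (this.trans ?_)
  simp [Measure.real, hab]

lemma pdf_bound (x : ℝ) (hx : 0 ≤ x) : x * gaussianPDFReal 0 1 x ≤ 0.4 := by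
  have h1 : x * rexp (-(x ^ 2) / 2) ≤ 1 := by
    have h2 : x ≤ rexp (x ^ 2 / 2) := by
      have := Real.add_one_le_exp (x ^ 2 / 2)
      nlinarith [sq_nonneg (x - 1)]
    have h3 : rexp (x ^ 2 / 2) * rexp (-(x ^ 2) / 2) = 1 := by
      rw [← Real.exp_add]; ring_nf; simp
    calc _ ≤ rexp (x ^ 2 / 2) * rexp (-(x ^ 2) / 2) := by gcongr
      _ = 1 := h3
  have h4 : (√(2 * π))⁻¹ ≤ 0.4 := by
    have : (2.5 : ℝ) ≤ √(2 * π) := by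
      apply Real.le_sqrt_of_sq_le
      nlinarith [Real.pi_gt_d2]
    calc (√(2 * π))⁻¹ ≤ (2.5 : ℝ)⁻¹ := by gcongr
      _ = 0.4 := by norm_num
  have h5 : gaussianPDFReal 0 1 x = (√(2 * π))⁻¹ * rexp (-(x ^ 2) / 2) := by
    simp [gaussianPDFReal]
  rw [h5]
  have : 0 ≤ x * rexp (-(x ^ 2) / 2) := by positivity
  have : 0 ≤ (√(2 * π))⁻¹ := by positivity
  nlinarith

lemma pdf_anti {x y : ℝ} (h : |x| ≤ |y|) : gaussianPDFReal 0 1 y ≤ gaussianPDFReal 0 1 x := by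
  simp only [gaussianPDFReal]
  have : x ^ 2 ≤ y ^ 2 := sq_le_sq.2 h
  refine mul_le_mul_of_nonneg_left (Real.exp_le_exp.2 ?_) (by positivity)
  simp only [sub_zero, NNReal.coe_one, mul_one]
  linarith

/-- comparison of `Φ (x)` and `Φ (r x)` for `r ≥ 1` -/
lemma gaussian_scale_pt (x r : ℝ) (hr : 1 ≤ r) :
    |((gaussianReal 0 1) (Set.Iic (r * x))).toReal - ((gaussianReal 0 1) (Set.Iic x)).toReal|
      ≤ 0.4 * (r - 1) := by
  rcases le_total 0 x with hx | hx
  · have hab : x ≤ r * x := by nlinarith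
    have := gaussian_std_interval (M := gaussianPDFReal 0 1 x) hab (fun y hy => pdf_anti (by
      rw [abs_of_nonneg hx, abs_of_nonneg (hx.trans hy.1.le)]; exact hy.1.le))
    have hb := pdf_bound x hx
    rw [abs_of_nonneg]
    · nlinarith
    · have := ENNReal.toReal_mono (by finiteness)
        (measure_mono (μ := gaussianReal 0 1) (Set.Iic_subset_Iic.2 hab))
      linarith
  · have hab : r * x ≤ x := by nlinarith
    have := gaussian_std_interval (M := gaussianPDFReal 0 1 (-x)) hab (fun y hy => pdf_anti (by
      rw [abs_neg, abs_of_nonpos hx, abs_of_nonpos (hy.2.trans hx)]; linarith [hy.2]))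
    have hb := pdf_bound (-x) (by linarith)
    rw [abs_of_nonpos]
    · nlinarith
    · have := ENNReal.toReal_mono (by finiteness)
        (measure_mono (μ := gaussianReal 0 1) (Set.Iic_subset_Iic.2 hab))
      linarith

lemma abs_sub_prob_le (μ ν : Measure ℝ) [IsProbabilityMeasure μ] [IsProbabilityMeasure ν]
    (s t : Set ℝ) : |(μ s).toReal - (ν t).toReal| ≤ 1 := by
  have h1 : (μ s).toReal ≤ 1 := measureReal_le_one
  have h2 : (ν t).toReal ≤ 1 := measureReal_le_one
  have h3 : 0 ≤ (μ s).toReal := ENNReal.toReal_nonneg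
  have h4 : 0 ≤ (ν t).toReal := ENNReal.toReal_nonneg
  rw [abs_le]; constructor <;> linarith

lemma gaussian_scale_Iic (v : ℝ≥0) (hv : v ≠ 0) (z : ℝ) :
    (gaussianReal 0 v) (Set.Iic z) = (gaussianReal 0 1) (Set.Iic (z / √v)) := by
  have hv' : 0 < √(v : ℝ) := by positivity
  have h := gaussianReal_map_const_mul (μ := 0) (v := 1) (√v)
  have e : gaussianReal 0 v = (gaussianReal 0 1).map (fun x => √v * x) := by
    rw [h]; congr 1
    · simp
    · ext; simp
  rw [e, Measure.map_apply (by fun_prop) measurableSet_Iic]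
  congr 1
  ext x
  simp [le_div_iff₀ hv', mul_comm]

lemma gauss_cmp (v : ℝ≥0) (z : ℝ) :
    |((gaussianReal 0 v) (Set.Iic z)).toReal - ((gaussianReal 0 1) (Set.Iic z)).toReal|
      ≤ 1.1 * |(v : ℝ) - 1| := by
  rcases lt_or_ge (v : ℝ) (1/11) with h | h
  · refine (abs_sub_prob_le _ _ _ _).trans ?_
    rw [abs_of_neg (by linarith)]; linarith
  have hv0 : v ≠ 0 := by rintro rfl; norm_num at h
  rw [gaussian_scale_Iic v hv0]
  set s := √(v : ℝ)
  have hs : s ^ 2 = v := Real.sq_sqrt v.2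
  have hs0 : 0 < s := by positivity
  have hs3 : 0.3 ≤ s := by
    apply Real.le_sqrt_of_sq_le; norm_num at h ⊢; linarith
  rw [← hs]
  rcases le_total s 1 with h1 | h1
  · have := gaussian_scale_pt z (1 / s) ((le_div_iff₀ hs0).2 (by linarith))
    rw [show 1 / s * z = z / s by ring] at this
    refine this.trans ?_
    rw [abs_of_nonpos (by nlinarith)]
    have : 1 / s - 1 = (1 - s) / s := by field_simp
    rw [this, mul_div_assoc', div_le_iff₀ hs0]
    nlinarith [mul_nonneg (sub_nonneg.2 h1) (sub_nonneg.2 hs3), mul_nonneg (mul_nonneg (sub_nonneg.2 h1) (sub_nonneg.2 hs3)) hs0.le]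
  · have := gaussian_scale_pt (z / s) s h1
    rw [mul_div_cancel₀ _ hs0.ne'] at this
    rw [abs_sub_comm]
    refine this.trans ?_
    rw [abs_of_nonneg (by nlinarith)]
    nlinarith

section gaussianVec

set_option linter.unusedSectionVars false

variable {Ω' : Type} [MeasurableSpace Ω'] {P : Measure Ω'} [IsProbabilityMeasure P]

/-- All linear combinations are centered Gaussian. -/
def GVec {n : ℕ} (P : Measure Ω') (Y : Fin n → Ω' → ℝ) : Prop :=
  (∀ j, Measurable (Y j)) ∧
    ∀ c : Fin n → ℝ, ∃ v : ℝ≥0, Measure.map (fun ω => ∑ j, c j * Y j ω) P = gaussianReal 0 v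

lemma GVec.memLp {n : ℕ} {Y : Fin n → Ω' → ℝ} (h : GVec P Y) (c : Fin n → ℝ) (p : ℝ≥0) :
    MemLp (fun ω => ∑ j, c j * Y j ω) p P := by
  obtain ⟨v, hv⟩ := h.2 c
  have hm : Measurable (fun ω => ∑ j, c j * Y j ω) := by
    have := h.1; fun_prop
  have h1 := memLp_id_gaussianReal (μ := 0) (v := v) p
  rw [← hv] at h1
  exact h1.comp_of_map hm.aemeasurable

lemma GVec.memLp_coord {n : ℕ} {Y : Fin n → Ω' → ℝ} (h : GVec P Y) (j : Fin n) (p : ℝ≥0) :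
    MemLp (Y j) p P := by
  have := h.memLp (Pi.single j 1) p
  simpa [Pi.single_apply] using this

lemma GVec.integrable_mul {n : ℕ} {Y : Fin n → Ω' → ℝ} (h : GVec P Y) (j k : Fin n) :
    Integrable (fun ω => Y j ω * Y k ω) P := by
  have h1 : MemLp (Y j) 2 P := h.memLp_coord j 2
  have h2 : MemLp (Y k) 2 P := h.memLp_coord k 2
  exact MemLp.integrable_mul h1 h2

lemma GVec.integrable_pow {n : ℕ} {Y : Fin n → Ω' → ℝ} (h : GVec P Y) (c : Fin n → ℝ) (m : ℕ) :
    Integrable (fun ω => (∑ j, c j * Y j ω) ^ m) P := by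
  rcases Nat.eq_zero_or_pos m with rfl | hm
  · simp
  have h1 := (h.memLp c m).integrable_norm_rpow (by simpa using hm.ne') (by simp)
  refine h1.mono' ?_ ?_
  · have := h.1
    have : Measurable (fun ω => (∑ j, c j * Y j ω) ^ m) := by fun_prop
    exact this.aestronglyMeasurable
  · filter_upwards with ω
    simp

lemma GVec.sq_integral {n : ℕ} {Y : Fin n → Ω' → ℝ} (h : GVec P Y) (c : Fin n → ℝ) :
    ∫ ω, (∑ j, c j * Y j ω) ^ 2 ∂P = ∑ j, ∑ k, c j * c k * ∫ ω, Y j ω * Y k ω ∂P := by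
  have e : ∀ ω, (∑ j, c j * Y j ω) ^ 2 = ∑ j, ∑ k, c j * c k * (Y j ω * Y k ω) := by
    intro ω
    rw [sq, Finset.sum_mul_sum]
    refine Finset.sum_congr rfl fun j _ => Finset.sum_congr rfl fun k _ => by ring
  simp_rw [e]
  rw [integral_finsetSum _ fun j _ => integrable_finsetSum _ fun k _ =>
    (h.integrable_mul j k).const_mul _]
  refine Finset.sum_congr rfl fun j _ => ?_
  rw [integral_finsetSum _ fun k _ => (h.integrable_mul j k).const_mul _]
  refine Finset.sum_congr rfl fun k _ => ?_
  rw [integral_const_mul]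

lemma GVec.law {n : ℕ} {Y : Fin n → Ω' → ℝ} (h : GVec P Y) (c : Fin n → ℝ) :
    ∃ v : ℝ≥0, Measure.map (fun ω => ∑ j, c j * Y j ω) P = gaussianReal 0 v ∧
      (v : ℝ) = ∑ j, ∑ k, c j * c k * ∫ ω, Y j ω * Y k ω ∂P := by
  obtain ⟨v, hv⟩ := h.2 c
  refine ⟨v, hv, ?_⟩
  have hm : Measurable (fun ω => ∑ j, c j * Y j ω) := by
    have := h.1; fun_prop
  rw [← h.sq_integral c, ← gaussian_moment2 v, ← hv, integral_map hm.aemeasurable (by fun_prop)]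

lemma GVec.four {n : ℕ} {Y : Fin n → Ω' → ℝ} (h : GVec P Y) (c : Fin n → ℝ) :
    ∫ ω, (∑ j, c j * Y j ω) ^ 4 ∂P =
      3 * (∑ j, ∑ k, c j * c k * ∫ ω, Y j ω * Y k ω ∂P) ^ 2 := by
  obtain ⟨v, hv, hv'⟩ := h.law c
  have hm : Measurable (fun ω => ∑ j, c j * Y j ω) := by
    have := h.1; fun_prop
  rw [← hv', ← gaussian_moment4 v, ← hv, integral_map hm.aemeasurable (by fun_prop)]

lemma GVec.isserlis4 {Y : Fin 4 → Ω' → ℝ} (h : GVec P Y) :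
    Integrable (fun ω => Y 0 ω * Y 1 ω * (Y 2 ω * Y 3 ω)) P ∧
    ∫ ω, Y 0 ω * Y 1 ω * (Y 2 ω * Y 3 ω) ∂P =
      (∫ ω, Y 0 ω * Y 1 ω ∂P) * (∫ ω, Y 2 ω * Y 3 ω ∂P)
      + (∫ ω, Y 0 ω * Y 2 ω ∂P) * (∫ ω, Y 1 ω * Y 3 ω ∂P)
      + (∫ ω, Y 0 ω * Y 3 ω ∂P) * (∫ ω, Y 1 ω * Y 2 ω ∂P) := by
  let s : Fin 2 → ℝ := ![1, -1]
  let S : Fin 2 × Fin 2 × Fin 2 → Ω' → ℝ := fun e ω =>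
    ∑ j, (![1, s e.1, s e.2.1, s e.2.2] : Fin 4 → ℝ) j * Y j ω
  have e1 : (fun ω => Y 0 ω * Y 1 ω * (Y 2 ω * Y 3 ω)) =
      fun ω => ∑ e : Fin 2 × Fin 2 × Fin 2, s e.1 * s e.2.1 * s e.2.2 / 192 * (S e ω) ^ 4 := by
    ext ω
    simp only [S, s, Fin.sum_univ_four, Fintype.sum_prod_type, Fin.sum_univ_two]
    simp
    ring
  have hi : ∀ e ∈ (Finset.univ : Finset (Fin 2 × Fin 2 × Fin 2)),
      Integrable (fun ω => s e.1 * s e.2.1 * s e.2.2 / 192 * (S e ω) ^ 4) P := fun e _ =>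
    (h.integrable_pow _ 4).const_mul _
  constructor
  · rw [e1]
    exact integrable_finsetSum _ hi
  · rw [e1, integral_finsetSum _ hi]
    simp_rw [integral_const_mul]
    simp only [S]
    simp_rw [h.four]
    have c10 : ∫ ω, Y 1 ω * Y 0 ω ∂P = ∫ ω, Y 0 ω * Y 1 ω ∂P := by simp_rw [mul_comm]
    have c20 : ∫ ω, Y 2 ω * Y 0 ω ∂P = ∫ ω, Y 0 ω * Y 2 ω ∂P := by simp_rw [mul_comm]
    have c30 : ∫ ω, Y 3 ω * Y 0 ω ∂P = ∫ ω, Y 0 ω * Y 3 ω ∂P := by simp_rw [mul_comm]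
    have c21 : ∫ ω, Y 2 ω * Y 1 ω ∂P = ∫ ω, Y 1 ω * Y 2 ω ∂P := by simp_rw [mul_comm]
    have c31 : ∫ ω, Y 3 ω * Y 1 ω ∂P = ∫ ω, Y 1 ω * Y 3 ω ∂P := by simp_rw [mul_comm]
    have c32 : ∫ ω, Y 3 ω * Y 2 ω ∂P = ∫ ω, Y 2 ω * Y 3 ω ∂P := by simp_rw [mul_comm]
    simp only [s, Fin.sum_univ_four, Fintype.sum_prod_type, Fin.sum_univ_two, c10, c20, c30, c21,
      c31, c32]
    generalize ∫ ω, Y 0 ω * Y 1 ω ∂P = x01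
    generalize ∫ ω, Y 0 ω * Y 2 ω ∂P = x02
    generalize ∫ ω, Y 0 ω * Y 3 ω ∂P = x03
    generalize ∫ ω, Y 1 ω * Y 2 ω ∂P = x12
    generalize ∫ ω, Y 1 ω * Y 3 ω ∂P = x13
    generalize ∫ ω, Y 2 ω * Y 3 ω ∂P = x23
    generalize ∫ ω, Y 0 ω * Y 0 ω ∂P = x00
    generalize ∫ ω, Y 1 ω * Y 1 ω ∂P = x11
    generalize ∫ ω, Y 2 ω * Y 2 ω ∂P = x22
    generalize ∫ ω, Y 3 ω * Y 3 ω ∂P = x33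
    simp
    ring

lemma GVec.comp {n m : ℕ} {Y : Fin n → Ω' → ℝ} (h : GVec P Y) (f : Fin m → Fin n) :
    GVec P (fun i => Y (f i)) := by
  refine ⟨fun j => h.1 _, fun c => ?_⟩
  obtain ⟨v, hv⟩ := h.2 (fun j => ∑ i, if f i = j then c i else 0)
  refine ⟨v, ?_⟩
  rw [← hv]
  congr 1
  ext ω
  simp_rw [Finset.sum_mul, ite_mul, zero_mul]
  rw [Finset.sum_comm]
  simp

lemma GVec.isserlis {n : ℕ} {Y : Fin n → Ω' → ℝ} (h : GVec P Y) (j k l m : Fin n) :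
    Integrable (fun ω => Y j ω * Y k ω * (Y l ω * Y m ω)) P ∧
    ∫ ω, Y j ω * Y k ω * (Y l ω * Y m ω) ∂P =
      (∫ ω, Y j ω * Y k ω ∂P) * (∫ ω, Y l ω * Y m ω ∂P)
      + (∫ ω, Y j ω * Y l ω ∂P) * (∫ ω, Y k ω * Y m ω ∂P)
      + (∫ ω, Y j ω * Y m ω ∂P) * (∫ ω, Y k ω * Y l ω ∂P) := by
  simpa using (h.comp ![j, k, l, m]).isserlis4

lemma sum4_bound {n : ℕ} (r : Fin n → Fin n → ℝ) (M R : ℝ) (hr0 : ∀ j k, 0 ≤ r j k)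
    (hM : ∀ j k, r j k ≤ M) (hR : ∀ j, ∑ k, r j k ≤ R) :
    ∑ j, ∑ k, ∑ l, ∑ m, r j k * r l m * (r j l * r k m + r j m * r k l)
      ≤ 2 * (M * (n * R ^ 3)) := by
  rcases Nat.eq_zero_or_pos n with rfl | hn
  · simp
  have hR0 : 0 ≤ R := (Finset.sum_nonneg fun k _ => hr0 ⟨0, hn⟩ k).trans (hR _)
  have hM0 : 0 ≤ M := (hr0 _ _).trans (hM ⟨0, hn⟩ ⟨0, hn⟩)
  have h1 : ∑ j, ∑ k, ∑ l, ∑ m, r j k * r l m * (r j l * r k m + r j m * r k l)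
      ≤ ∑ j, ∑ k, ∑ l, ∑ m, (M * (r j k * (r j l * r l m)) + M * (r j k * (r k l * r l m))) := by
    gcongr with j _ k _ l _ m _
    have a := mul_le_mul_of_nonneg_left (hM k m)
      (mul_nonneg (mul_nonneg (hr0 j k) (hr0 l m)) (hr0 j l))
    have b := mul_le_mul_of_nonneg_left (hM j m)
      (mul_nonneg (mul_nonneg (hr0 j k) (hr0 l m)) (hr0 k l))
    linarith
  have h2 (j : Fin n) : ∑ l, ∑ m, r j l * r l m ≤ R ^ 2 := by
    calc ∑ l, ∑ m, r j l * r l m = ∑ l, r j l * ∑ m, r l m := by simp_rw [Finset.mul_sum]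
      _ ≤ ∑ l, r j l * R := by
        gcongr with l _
        · exact hr0 _ _
        · exact hR l
      _ = (∑ l, r j l) * R := by rw [Finset.sum_mul]
      _ ≤ R * R := by gcongr; exact hR j
      _ = R ^ 2 := by ring
  have h3 : ∑ j, ∑ k, ∑ l, ∑ m, M * (r j k * (r j l * r l m)) ≤ M * (n * R ^ 3) := by
    simp_rw [← Finset.mul_sum]
    gcongr
    calc ∑ j, ∑ k, r j k * ∑ l, r j l * ∑ m, r l m
        ≤ ∑ j, ∑ k, r j k * R ^ 2 := by
          gcongr with j _ k _
          · exact hr0 _ _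
          · have := h2 j
            simpa [Finset.mul_sum] using this
      _ = ∑ j, (∑ k, r j k) * R ^ 2 := by simp_rw [Finset.sum_mul]
      _ ≤ ∑ j : Fin n, R * R ^ 2 := by
          gcongr with j _
          exact hR j
      _ = n * R ^ 3 := by
          rw [Finset.sum_const, Finset.card_univ, Fintype.card_fin, nsmul_eq_mul]; ring
  have h4 : ∑ j, ∑ k, ∑ l, ∑ m, M * (r j k * (r k l * r l m)) ≤ M * (n * R ^ 3) := by
    simp_rw [← Finset.mul_sum]
    gcongr
    calc ∑ j, ∑ k, r j k * ∑ l, r k l * ∑ m, r l m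
        ≤ ∑ j, ∑ k, r j k * R ^ 2 := by
          gcongr with j _ k _
          · exact hr0 _ _
          · have := h2 k
            simpa [Finset.mul_sum] using this
      _ = ∑ j, (∑ k, r j k) * R ^ 2 := by simp_rw [Finset.sum_mul]
      _ ≤ ∑ j : Fin n, R * R ^ 2 := by
          gcongr with j _
          exact hR j
      _ = n * R ^ 3 := by
          rw [Finset.sum_const, Finset.card_univ, Fintype.card_fin, nsmul_eq_mul]; ring
  refine h1.trans ?_
  simp_rw [Finset.sum_add_distrib]
  linarith

/-- Second moment of the centred quadratic form. -/
lemma GVec.quad {n : ℕ} {Y : Fin n → Ω' → ℝ} (h : GVec P Y) (r : Fin n → Fin n → ℝ)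
    (hr : ∀ j k, ∫ ω, Y j ω * Y k ω ∂P = r j k) (M R κ : ℝ) (hr0 : ∀ j k, 0 ≤ r j k)
    (hM : ∀ j k, r j k ≤ M) (hR : ∀ j, ∑ k, r j k ≤ R) :
    MemLp (fun ω => κ * (∑ j, ∑ k, Y j ω * Y k ω * r j k) - 1) 2 P ∧
    ∫ ω, (κ * (∑ j, ∑ k, Y j ω * Y k ω * r j k) - 1) ^ 2 ∂P
      ≤ (κ * (∑ j, ∑ k, r j k ^ 2) - 1) ^ 2 + κ ^ 2 * (2 * (M * (n * R ^ 3))) := by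
  have hmeas := h.1
  let V : Ω' → ℝ := fun ω => ∑ j, ∑ k, Y j ω * Y k ω * r j k
  have hVm : Measurable V := by fun_prop
  have hVi : Integrable V P := integrable_finsetSum _ fun j _ => integrable_finsetSum _ fun k _ =>
    (h.integrable_mul j k).mul_const _
  have hVe : ∫ ω, V ω ∂P = ∑ j, ∑ k, r j k ^ 2 := by
    simp only [V]
    rw [integral_finsetSum _ fun j _ => integrable_finsetSum _ fun k _ =>
      (h.integrable_mul j k).mul_const _]
    refine Finset.sum_congr rfl fun j _ => ?_
    rw [integral_finsetSum _ fun k _ => (h.integrable_mul j k).mul_const _]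
    refine Finset.sum_congr rfl fun k _ => ?_
    rw [integral_mul_const, hr]; ring
  have hV2 : ∀ ω, V ω ^ 2 = ∑ j, ∑ k, ∑ l, ∑ m,
      (Y j ω * Y k ω * (Y l ω * Y m ω)) * (r j k * r l m) := by
    intro ω
    simp only [V]
    rw [sq, Finset.sum_mul]
    refine Finset.sum_congr rfl fun j _ => ?_
    rw [Finset.sum_mul]
    refine Finset.sum_congr rfl fun k _ => ?_
    rw [Finset.mul_sum]
    refine Finset.sum_congr rfl fun l _ => ?_
    rw [Finset.mul_sum]
    refine Finset.sum_congr rfl fun m _ => by ring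
  have hI : ∀ j k l m, Integrable (fun ω => (Y j ω * Y k ω * (Y l ω * Y m ω)) * (r j k * r l m)) P :=
    fun j k l m => (h.isserlis j k l m).1.mul_const _
  have hV2i : Integrable (fun ω => V ω ^ 2) P := by
    simp_rw [hV2]
    exact integrable_finsetSum _ fun j _ => integrable_finsetSum _ fun k _ =>
      integrable_finsetSum _ fun l _ => integrable_finsetSum _ fun m _ => hI j k l m
  have hV2e : ∫ ω, V ω ^ 2 ∂P = (∑ j, ∑ k, r j k ^ 2) ^ 2 +
      ∑ j, ∑ k, ∑ l, ∑ m, r j k * r l m * (r j l * r k m + r j m * r k l) := by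
    have e : ∫ ω, V ω ^ 2 ∂P = ∑ j, ∑ k, ∑ l, ∑ m,
        (r j k ^ 2 * r l m ^ 2 + r j k * r l m * (r j l * r k m + r j m * r k l)) := by
      simp_rw [hV2]
      rw [integral_finsetSum _ fun j _ => integrable_finsetSum _ fun k _ =>
        integrable_finsetSum _ fun l _ => integrable_finsetSum _ fun m _ => hI j k l m]
      refine Finset.sum_congr rfl fun j _ => ?_
      rw [integral_finsetSum _ fun k _ =>
        integrable_finsetSum _ fun l _ => integrable_finsetSum _ fun m _ => hI j k l m]
      refine Finset.sum_congr rfl fun k _ => ?_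
      rw [integral_finsetSum _ fun l _ => integrable_finsetSum _ fun m _ => hI j k l m]
      refine Finset.sum_congr rfl fun l _ => ?_
      rw [integral_finsetSum _ fun m _ => hI j k l m]
      refine Finset.sum_congr rfl fun m _ => ?_
      rw [integral_mul_const, (h.isserlis j k l m).2]
      simp only [hr]
      ring
    rw [e]
    simp_rw [Finset.sum_add_distrib]
    congr 1
    simp_rw [← Finset.mul_sum, ← Finset.sum_mul]
    ring
  have hVL : MemLp V 2 P := (memLp_two_iff_integrable_sq hVm.aestronglyMeasurable).2 hV2i
  refine ⟨(hVL.const_mul κ).sub (memLp_const 1), ?_⟩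
  have e : ∀ ω, (κ * (∑ j, ∑ k, Y j ω * Y k ω * r j k) - 1) ^ 2
      = κ ^ 2 * V ω ^ 2 - 2 * κ * V ω + 1 := fun ω => by simp only [V]; ring
  simp_rw [e]
  rw [integral_add (by exact (hV2i.const_mul _).sub (hVi.const_mul _)) (integrable_const _),
    integral_sub (hV2i.const_mul _) (hVi.const_mul _), integral_const_mul, integral_const_mul,
    hV2e, hVe]
  have := mul_le_mul_of_nonneg_left (sum4_bound r M R hr0 hM hR) (sq_nonneg κ)
  simp
  linarith

/-- The conditional Gaussian comparison. -/
lemma cond_cmp {n : ℕ} {Z Y : Fin n → Ω' → ℝ} (hZ : GVec P Z) (hY : ∀ j, Measurable (Y j))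
    (r : Fin n → Fin n → ℝ)
    (hr : ∀ j k, ∫ ω, Z j ω * Z k ω ∂P = r j k)
    (hind : IndepFun (fun ω j => Z j ω) (fun ω j => Y j ω) P) (κ z : ℝ)
    (hL : MemLp (fun ω => κ ^ 2 * (∑ j, ∑ k, Y j ω * Y k ω * r j k) - 1) 2 P) :
    |(P {ω | κ * ∑ j, Z j ω * Y j ω ≤ z}).toReal - (gaussianReal 0 1 (Set.Iic z)).toReal|
      ≤ 1.1 * √(∫ ω, (κ ^ 2 * (∑ j, ∑ k, Y j ω * Y k ω * r j k) - 1) ^ 2 ∂P) := by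
  have hZm := hZ.1
  let Zv : Ω' → Fin n → ℝ := fun ω j => Z j ω
  let Yv : Ω' → Fin n → ℝ := fun ω j => Y j ω
  have hZv : Measurable Zv := by fun_prop
  have hYv : Measurable Yv := by fun_prop
  have hprod := (indepFun_iff_map_prod_eq_prod_map_map hZv.aemeasurable hYv.aemeasurable).1 hind
  let A : Set ((Fin n → ℝ) × (Fin n → ℝ)) := {p | κ * ∑ j, p.1 j * p.2 j ≤ z}
  have hA : MeasurableSet A := by
    apply measurableSet_le <;> fun_prop
  have : IsProbabilityMeasure (P.map Zv) := Measure.isProbabilityMeasure_map hZv.aemeasurable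
  have : IsProbabilityMeasure (P.map Yv) := Measure.isProbabilityMeasure_map hYv.aemeasurable
  let g : (Fin n → ℝ) → ℝ≥0∞ := fun y => P.map Zv ((fun x => (x, y)) ⁻¹' A)
  have hg : Measurable g := measurable_measure_prodMk_right hA
  have h1 : P {ω | κ * ∑ j, Z j ω * Y j ω ≤ z} = ∫⁻ ω, g (Yv ω) ∂P := by
    have : P {ω | κ * ∑ j, Z j ω * Y j ω ≤ z} = P.map (fun ω => (Zv ω, Yv ω)) A := by
      rw [Measure.map_apply (by fun_prop) hA]; rfl
    rw [this, hprod, Measure.prod_apply_symm hA, lintegral_map hg hYv]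
  have hg1 : ∀ y, g y ≤ 1 := fun y => prob_le_one
  have h2 : (P {ω | κ * ∑ j, Z j ω * Y j ω ≤ z}).toReal = ∫ ω, (g (Yv ω)).toReal ∂P := by
    rw [h1, integral_toReal (by exact (hg.comp hYv).aemeasurable)]
    filter_upwards with ω
    exact (hg1 _).trans_lt ENNReal.one_lt_top
  have hgi : Integrable (fun ω => (g (Yv ω)).toReal) P := by
    refine Integrable.of_bound (C := 1) ((hg.comp hYv).ennreal_toReal).aestronglyMeasurable ?_
    filter_upwards with ω
    rw [Real.norm_of_nonneg ENNReal.toReal_nonneg]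
    exact ENNReal.toReal_le_of_le_ofReal zero_le_one (by simpa using hg1 _)
  have h3 : ∀ y : Fin n → ℝ, |(g y).toReal - (gaussianReal 0 1 (Set.Iic z)).toReal|
      ≤ 1.1 * |κ ^ 2 * (∑ j, ∑ k, y j * y k * r j k) - 1| := by
    intro y
    obtain ⟨v, hv, hv'⟩ := hZ.law (fun j => κ * y j)
    have hgy : g y = gaussianReal 0 v (Set.Iic z) := by
      rw [← hv, Measure.map_apply (by fun_prop) measurableSet_Iic]
      simp only [g]
      rw [Measure.map_apply hZv]
      · congr 1
        ext ω
        simp only [A, Zv, Set.mem_preimage, Set.mem_ofPred_eq, Set.mem_Iic, Finset.mul_sum]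
        rw [show (∑ i, κ * (Z i ω * y i)) = ∑ j, κ * y j * Z j ω from
          Finset.sum_congr rfl fun j _ => by ring]
      · exact measurable_prodMk_right hA
    rw [hgy]
    refine (gauss_cmp v z).trans (le_of_eq ?_)
    rw [hv']
    simp only [hr, Finset.mul_sum]
    congr 3
    refine Finset.sum_congr rfl fun j _ => Finset.sum_congr rfl fun k _ => by ring
  have h4 : ((P {ω | κ * ∑ j, Z j ω * Y j ω ≤ z}).toReal - (gaussianReal 0 1 (Set.Iic z)).toReal)
      = ∫ ω, ((g (Yv ω)).toReal - (gaussianReal 0 1 (Set.Iic z)).toReal) ∂P := by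
    rw [h2, integral_sub hgi (integrable_const _)]
    simp
  rw [h4]
  have hLi := hL.integrable one_le_two
  calc _ ≤ ∫ ω, |(g (Yv ω)).toReal - (gaussianReal 0 1 (Set.Iic z)).toReal| ∂P :=
        abs_integral_le_integral_abs
    _ ≤ ∫ ω, 1.1 * |κ ^ 2 * (∑ j, ∑ k, Y j ω * Y k ω * r j k) - 1| ∂P := by
        refine integral_mono (hgi.sub (integrable_const _)).abs (hLi.abs.const_mul _) fun ω => ?_
        exact h3 (Yv ω)
    _ = 1.1 * ∫ ω, |κ ^ 2 * (∑ j, ∑ k, Y j ω * Y k ω * r j k) - 1| ∂P := integral_const_mul _ _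
    _ ≤ _ := by
        gcongr
        apply Real.le_sqrt_of_sq_le
        have hv := variance_nonneg (fun ω => |κ ^ 2 * (∑ j, ∑ k, Y j ω * Y k ω * r j k) - 1|) P
        rw [variance_eq_sub (by exact hL.abs)] at hv
        simp only [Pi.pow_apply, sq_abs] at hv
        linarith

end gaussianVec

/-! ### Deterministic sums -/

/-- Distance on `ℕ`. -/
def nd (j k : ℕ) : ℕ := (j - k) + (k - j)

/-- Normalised covariance. -/
def rr (q : ℝ) (j k : ℕ) : ℝ := q ^ nd j k - q ^ (j + k)

lemma row_exact (q : ℝ) (j n : ℕ) (h : j < n) :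
    (1 - q) * ∑ k ∈ range n, q ^ nd j k = 1 + q - q ^ (j + 1) - q ^ (n - j) := by
  induction n, h using Nat.le_induction with
  | base =>
    have e : ∑ k ∈ range (j + 1), q ^ nd j k = ∑ k ∈ range (j + 1), q ^ k := by
      rw [← Finset.sum_range_reflect]
      refine Finset.sum_congr rfl fun k hk => ?_
      have := Finset.mem_range.1 hk
      congr 1
      unfold nd; omega
    rw [Nat.succ_eq_add_one, e, mul_neg_geom_sum]
    simp only [Nat.add_sub_cancel_left, pow_one]
    ring
  | succ n hn ih =>
    rw [Finset.sum_range_succ, mul_add, ih]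
    have e1 : nd j n = n - j := by unfold nd; omega
    have e2 : n + 1 - j = (n - j) + 1 := by omega
    rw [e1, e2, pow_succ]
    ring

variable {q : ℝ}

lemma rr_nonneg (hq : 0 < q) (hq1 : q < 1) (j k : ℕ) : 0 ≤ rr q j k := by
  unfold rr
  have : q ^ (j + k) ≤ q ^ nd j k := pow_le_pow_of_le_one hq.le hq1.le (by unfold nd; omega)
  linarith

lemma rr_le_pow (hq : 0 < q) (j k : ℕ) : rr q j k ≤ q ^ nd j k := by
  unfold rr
  have : 0 ≤ q ^ (j + k) := by positivity
  linarith

lemma rr_le_one (hq : 0 < q) (hq1 : q < 1) (j k : ℕ) : rr q j k ≤ 1 :=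
  (rr_le_pow hq j k).trans (pow_le_one₀ hq.le hq1.le)

lemma row_le (hq : 0 < q) (hq1 : q < 1) {j n : ℕ} (h : j < n) :
    ∑ k ∈ range n, q ^ nd j k ≤ (1 + q) / (1 - q) := by
  have h1 := row_exact q j n h
  rw [le_div_iff₀ (by linarith), mul_comm, h1]
  have : 0 ≤ q ^ (j + 1) := by positivity
  have : 0 ≤ q ^ (n - j) := by positivity
  linarith

lemma rr_row_le (hq : 0 < q) (hq1 : q < 1) {j n : ℕ} (h : j < n) :
    ∑ k ∈ range n, rr q j k ≤ (1 + q) / (1 - q) :=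
  (Finset.sum_le_sum fun k _ => rr_le_pow hq j k).trans (row_le hq hq1 h)

lemma rr_sq_upper (hq : 0 < q) (hq1 : q < 1) (n : ℕ) :
    ∑ j ∈ range n, ∑ k ∈ range n, rr q j k ^ 2 ≤ n * ((1 + q ^ 2) / (1 - q ^ 2)) := by
  have hp : 0 < q ^ 2 := by positivity
  have hp1 : q ^ 2 < 1 := by nlinarith
  calc _ ≤ ∑ j ∈ range n, ∑ k ∈ range n, (q ^ 2) ^ nd j k := by
        gcongr with j _ k _
        rw [← pow_mul, mul_comm, pow_mul]
        exact pow_le_pow_left₀ (rr_nonneg hq hq1 j k) (rr_le_pow hq j k) 2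
    _ ≤ ∑ j ∈ range n, (1 + q ^ 2) / (1 - q ^ 2) := by
        refine Finset.sum_le_sum fun j hj => row_le hp hp1 (Finset.mem_range.1 hj)
    _ = _ := by rw [Finset.sum_const, Finset.card_range, nsmul_eq_mul]

lemma geom_sum_le_inv (hq : 0 < q) (hq1 : q < 1) (n : ℕ) : ∑ k ∈ range n, q ^ k ≤ 1 / (1 - q) := by
  have h1 := mul_neg_geom_sum q n
  rw [le_div_iff₀ (by linarith), mul_comm, h1]
  have : 0 ≤ q ^ n := by positivity
  linarith

lemma rr_sq_lower (hq : 0 < q) (hq1 : q < 1) (n : ℕ) :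
    n * ((1 + q ^ 2) / (1 - q ^ 2)) - 2 * q ^ 2 / (1 - q ^ 2) ^ 2 - 2 / (1 - q) ^ 2 ≤
    ∑ j ∈ range n, ∑ k ∈ range n, rr q j k ^ 2 := by
  have hp : 0 < q ^ 2 := by positivity
  have hp1 : q ^ 2 < 1 := by nlinarith
  set p := q ^ 2 with hpq
  have h1 : ∑ j ∈ range n, ∑ k ∈ range n, (p ^ nd j k - 2 * (q ^ j * q ^ k))
      ≤ ∑ j ∈ range n, ∑ k ∈ range n, rr q j k ^ 2 := by
    gcongr with j _ k _
    have e : p ^ nd j k = (q ^ nd j k) ^ 2 := by rw [hpq, ← pow_mul, mul_comm, pow_mul]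
    unfold rr
    rw [e, ← pow_add]
    have a : q ^ nd j k ≤ 1 := pow_le_one₀ hq.le hq1.le
    have b : 0 ≤ q ^ (j + k) := by positivity
    nlinarith
  have h2 : ∑ j ∈ range n, ∑ k ∈ range n, q ^ j * q ^ k ≤ 1 / (1 - q) ^ 2 := by
    rw [← Finset.sum_mul_sum]
    have := geom_sum_le_inv hq hq1 n
    have h0 : 0 ≤ ∑ k ∈ range n, q ^ k := Finset.sum_nonneg fun k _ => by positivity
    calc _ ≤ (1 / (1 - q)) * (1 / (1 - q)) := by gcongr
      _ = _ := by rw [div_mul_div_comm]; ring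
  have h3 : ∑ j ∈ range n, ∑ k ∈ range n, p ^ nd j k
      = ∑ j ∈ range n, ((1 + p) / (1 - p) - (p * p ^ j + p ^ (n - j)) / (1 - p)) := by
    refine Finset.sum_congr rfl fun j hj => ?_
    have := row_exact p j n (Finset.mem_range.1 hj)
    have hne : 1 - p ≠ 0 := by linarith
    field_simp
    rw [mul_comm, this]; ring
  have h4 : ∑ j ∈ range n, p ^ (n - j) = ∑ j ∈ range n, p * p ^ j := by
    rw [← Finset.sum_range_reflect]
    refine Finset.sum_congr rfl fun k hk => ?_
    have := Finset.mem_range.1 hk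
    rw [← pow_succ']
    congr 1
    omega
  have h5 := geom_sum_le_inv hp hp1 n
  simp_rw [Finset.sum_sub_distrib, ← Finset.sum_div, Finset.sum_add_distrib] at h3 h1
  rw [h4, ← Finset.mul_sum] at h3
  simp_rw [← Finset.mul_sum] at h1 h2
  rw [h3] at h1
  have h6 : (p * ∑ i ∈ range n, p ^ i + p * ∑ i ∈ range n, p ^ i) / (1 - p)
      ≤ 2 * p / (1 - p) ^ 2 := by
    have hpos : 0 < 1 - p := by linarith
    rw [div_le_div_iff₀ hpos (by positivity)]
    rw [le_div_iff₀ hpos] at h5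
    have := mul_le_mul_of_nonneg_left h5 (show 0 ≤ 2 * p * (1 - p) by positivity)
    nlinarith
  have h7 : 2 / (1 - q) ^ 2 = 2 * (1 / (1 - q) ^ 2) := by ring
  simp only [Finset.sum_const, Finset.card_range, nsmul_eq_mul] at h1
  have h8 : ((n : ℝ) * 1 + n * p) / (1 - p) = n * ((1 + p) / (1 - p)) := by ring
  rw [h8] at h1
  linarith

/-! ### Limits -/

lemma lim_one : Tendsto (fun x : ℝ => x / (1 - rexp (-x))) (𝓝[>] 0) (𝓝 1) := by
  have h : HasDerivAt (fun x : ℝ => 1 - rexp (-x)) 1 0 := by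
    have := ((hasDerivAt_neg (0:ℝ)).exp).const_sub 1
    simpa using this
  have h1 := (h.tendsto_slope_zero_right).inv₀ one_ne_zero
  simp only [zero_add, neg_zero, Real.exp_zero, sub_self, sub_zero, smul_eq_mul, inv_one] at h1
  refine h1.congr fun x => ?_
  rw [mul_inv, inv_inv]; rfl

lemma lim_two : Tendsto (fun x : ℝ => x / (1 - rexp (-x) ^ 2)) (𝓝[>] 0) (𝓝 (1 / 2)) := by
  have ht : Tendsto (fun x : ℝ => 2 * x) (𝓝[>] 0) (𝓝[>] 0) := by
    refine tendsto_nhdsWithin_iff.2 ⟨?_, ?_⟩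
    · have : Tendsto (fun x : ℝ => 2 * x) (𝓝 0) (𝓝 (2 * 0)) := by
        exact (continuous_const.mul continuous_id).tendsto 0
      rw [mul_zero] at this
      exact this.mono_left nhdsWithin_le_nhds
    · filter_upwards [self_mem_nhdsWithin] with x hx
      simp at hx ⊢; exact hx
  have h := (lim_one.comp ht).div_const 2
  refine h.congr fun x => ?_
  simp only [Function.comp]
  rw [← Real.exp_nat_mul]
  push_cast
  rw [show -(2 * x) = 2 * -x by ring]
  ring

/-- the finite-`n` bound -/
def bnd (τ x : ℝ) : ℝ :=
  (x * ((1 + rexp (-x) ^ 2) / (1 - rexp (-x) ^ 2)) - 1) ^ 2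
  + (x * ((1 + rexp (-x) ^ 2) / (1 - rexp (-x) ^ 2))
      - x ^ 2 / τ * (2 * rexp (-x) ^ 2 / (1 - rexp (-x) ^ 2) ^ 2 + 2 / (1 - rexp (-x)) ^ 2) - 1) ^ 2
  + 2 * (x * ((1 + rexp (-x)) / (1 - rexp (-x)))) ^ 3 / τ

lemma lim_bnd (τ : ℝ) (hτ : 0 < τ) :
    Tendsto (bnd τ) (𝓝[>] 0) (𝓝 (25 / 4 / τ ^ 2 + 16 / τ)) := by
  have hq : Tendsto (fun x : ℝ => rexp (-x)) (𝓝[>] 0) (𝓝 1) := by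
    have : Tendsto (fun x : ℝ => rexp (-x)) (𝓝 0) (𝓝 (rexp (-0))) :=
      (Real.continuous_exp.comp continuous_neg).tendsto 0
    simp only [neg_zero, Real.exp_zero] at this
    exact this.mono_left nhdsWithin_le_nhds
  have hA := ((hq.pow 2).const_add 1).mul lim_two
  have hR := (hq.const_add 1).mul lim_one
  have hB := ((((hq.pow 2).const_mul 2).mul (lim_two.pow 2)).add
    ((lim_one.pow 2).const_mul 2)).div_const τ
  have h := (((hA.sub_const 1).pow 2).add (((hA.sub hB).sub_const 1).pow 2)).add
    (((hR.pow 3).const_mul 2).div_const τ)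
  have e : ((1 + 1 ^ 2) * (1 / 2) - 1) ^ 2 +
      ((1 + 1 ^ 2) * (1 / 2) - (2 * 1 ^ 2 * (1 / 2) ^ 2 + 2 * 1 ^ 2) / τ - 1) ^ 2 +
      2 * ((1 + 1) * 1) ^ 3 / τ = 25 / 4 / τ ^ 2 + 16 / τ := by
    field_simp; ring
  rw [e] at h
  refine h.congr fun x => ?_
  unfold bnd
  simp only [div_pow]
  ring

/-! ### Riemann sums -/

lemma riemann (f : ℝ → ℝ) (T : ℝ) (hT : 0 < T) (hf : ContinuousOn f (Set.Icc 0 T)) :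
    Tendsto (fun n : ℕ => T / (n + 1 : ℝ) * ∑ k ∈ range (n + 1), f (k * (T / (n + 1 : ℝ))))
      atTop (𝓝 (∫ u in (0:ℝ)..T, f u)) := by
  have huc := isCompact_Icc.uniformContinuousOn_of_continuous hf
  rw [Metric.tendsto_atTop]
  intro ε hε
  rw [Metric.uniformContinuousOn_iff_le] at huc
  obtain ⟨δ, hδ, huc⟩ := huc (ε / (2 * T)) (by positivity)
  have hlim : Tendsto (fun n : ℕ => T / (n + 1 : ℝ)) atTop (𝓝 0) := by
    have := (tendsto_one_div_add_atTop_nhds_zero_nat (𝕜 := ℝ)).const_mul T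
    simpa [div_eq_mul_inv] using this
  obtain ⟨N, hN⟩ := eventually_atTop.1 (hlim.eventually (gt_mem_nhds hδ))
  refine ⟨N, fun n hn => ?_⟩
  have hh := hN n hn
  set h := T / (n + 1 : ℝ) with hdef
  have hpos : 0 < h := by positivity
  have hnT : ((n + 1 : ℕ) : ℝ) * h = T := by rw [hdef]; push_cast; field_simp
  have hmem : ∀ k < n + 1, Set.Icc ((k : ℝ) * h) (((k + 1 : ℕ) : ℝ) * h) ⊆ Set.Icc 0 T := by
    intro k hk
    apply Set.Icc_subset_Icc (by positivity)
    rw [← hnT]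
    gcongr
    omega
  have hle : ∀ k : ℕ, (k : ℝ) * h ≤ ((k + 1 : ℕ) : ℝ) * h := fun k => by gcongr; simp
  have hint : ∀ k < n + 1, IntervalIntegrable f volume ((k : ℝ) * h) (((k + 1 : ℕ) : ℝ) * h) := by
    intro k hk
    apply ContinuousOn.intervalIntegrable
    rw [Set.uIcc_of_le (hle k)]
    exact hf.mono (hmem k hk)
  have hsum := intervalIntegral.sum_integral_adjacent_intervals (a := fun k : ℕ => (k : ℝ) * h) hint
  simp only [hnT, Nat.cast_zero, zero_mul] at hsum
  rw [← hsum, dist_eq_norm, Finset.mul_sum, ← Finset.sum_sub_distrib]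
  have hb : ∀ k ∈ range (n + 1),
      ‖h * f (k * h) - ∫ x in (k : ℝ) * h..((k + 1 : ℕ) : ℝ) * h, f x‖ ≤ ε / (2 * T) * h := by
    intro k hk
    have hk' := Finset.mem_range.1 hk
    have e : ((k + 1 : ℕ) : ℝ) * h - k * h = h := by push_cast; ring
    have e1 : h * f (k * h) = ∫ x in (k : ℝ) * h..((k + 1 : ℕ) : ℝ) * h, f (k * h) := by
      rw [intervalIntegral.integral_const, e, smul_eq_mul]
    rw [e1, ← intervalIntegral.integral_sub intervalIntegrable_const (hint k hk')]
    have := intervalIntegral.norm_integral_le_of_norm_le_const (a := (k : ℝ) * h)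
      (b := ((k + 1 : ℕ) : ℝ) * h) (f := fun x => f (k * h) - f x) (C := ε / (2 * T))
      (fun x hx => by
        rw [Set.uIoc_of_le (hle k)] at hx
        rw [← dist_eq_norm]
        refine huc _ (hmem k hk' ⟨le_rfl, hle k⟩) _ (hmem k hk' ⟨hx.1.le, hx.2⟩) ?_
        rw [Real.dist_eq, abs_sub_comm, abs_of_nonneg (by linarith [hx.1])]
        linarith [hx.2])
    rw [e, abs_of_pos hpos] at this
    exact this
  calc _ ≤ ∑ k ∈ range (n + 1), ε / (2 * T) * h := norm_sum_le_of_le _ hb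
    _ = ε / (2 * T) * (((n + 1 : ℕ) : ℝ) * h) := by
      rw [Finset.sum_const, Finset.card_range, nsmul_eq_mul]; ring
    _ = ε / 2 := by rw [hnT]; field_simp
    _ < ε := by linarith

/-! ### Passing to the limit in the Kolmogorov bound -/

lemma kol_limit {Ω' : Type} [MeasurableSpace Ω'] {P : Measure Ω'} [IsProbabilityMeasure P]
    (G : ℕ → Ω' → ℝ) (F : Ω' → ℝ) (hG : ∀ n, Measurable (G n))
    (hlim : ∀ᵐ ω ∂P, Tendsto (fun n => G n ω) atTop (𝓝 (F ω)))
    (d : ℕ → ℝ) (D : ℝ) (hd : Tendsto d atTop (𝓝 D))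
    (hb : ∀ n z, |(P {ω | G n ω ≤ z}).toReal - (gaussianReal 0 1 (Set.Iic z)).toReal| ≤ d n)
    (z : ℝ) :
    |(P {ω | F ω ≤ z}).toReal - (gaussianReal 0 1 (Set.Iic z)).toReal| ≤ D := by
  have hm := tendstoInMeasure_of_tendsto_ae (fun n => (hG n).aestronglyMeasurable) hlim
  rw [tendstoInMeasure_iff_norm] at hm
  set M := gaussianPDFReal 0 1 0
  have hM : ∀ x, gaussianPDFReal 0 1 x ≤ M := fun x => pdf_anti (by simp)
  have key : ∀ ε : ℝ, 0 < ε →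
      |(P {ω | F ω ≤ z}).toReal - (gaussianReal 0 1 (Set.Iic z)).toReal| ≤ D + M * ε := by
    intro ε hε
    have h0 : Tendsto (fun n => (P {ω | ε ≤ ‖G n ω - F ω‖}).toReal) atTop (𝓝 0) := by
      have := (ENNReal.tendsto_toReal ENNReal.zero_ne_top).comp (hm ε hε)
      simpa [Function.comp_def] using this
    have h1 := hd.add h0
    rw [add_zero] at h1
    have hc : Tendsto (fun n => d n + (P {ω | ε ≤ ‖G n ω - F ω‖}).toReal + M * ε) atTop
        (𝓝 (D + M * ε)) := h1.add_const _
    refine ge_of_tendsto' hc fun n => ?_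
    have u1 : (P {ω | F ω ≤ z}).toReal ≤ (P {ω | G n ω ≤ z + ε}).toReal
        + (P {ω | ε ≤ ‖G n ω - F ω‖}).toReal := by
      rw [← ENNReal.toReal_add (by finiteness) (by finiteness)]
      refine ENNReal.toReal_mono (by finiteness) ((measure_mono ?_).trans (measure_union_le _ _))
      intro ω hω
      simp only [Set.mem_union, Set.mem_ofPred_eq] at hω ⊢
      by_contra! hcon
      have := abs_lt.1 hcon.2
      linarith
    have u2 : (P {ω | G n ω ≤ z - ε}).toReal ≤ (P {ω | F ω ≤ z}).toReal
        + (P {ω | ε ≤ ‖G n ω - F ω‖}).toReal := by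
      rw [← ENNReal.toReal_add (by finiteness) (by finiteness)]
      refine ENNReal.toReal_mono (by finiteness) ((measure_mono ?_).trans (measure_union_le _ _))
      intro ω hω
      simp only [Set.mem_union, Set.mem_ofPred_eq] at hω ⊢
      by_contra! hcon
      have := abs_lt.1 hcon.2
      linarith
    have g1 := gaussian_std_interval (a := z) (b := z + ε) (by linarith) (fun x _ => hM x)
    have g2 := gaussian_std_interval (a := z - ε) (b := z) (by linarith) (fun x _ => hM x)
    have b1 := abs_le.1 (hb n (z + ε))
    have b2 := abs_le.1 (hb n (z - ε))
    rw [add_sub_cancel_left] at g1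
    rw [sub_sub_cancel] at g2
    rw [abs_le]
    constructor <;> linarith [b1.1, b1.2, b2.1, b2.2]
  have hl : Tendsto (fun ε : ℝ => D + M * ε) (𝓝[>] 0) (𝓝 D) := by
    have : Tendsto (fun ε : ℝ => D + M * ε) (𝓝 0) (𝓝 (D + M * 0)) := by
      exact (continuous_const.add (continuous_const.mul continuous_id)).tendsto 0
    rw [mul_zero, add_zero] at this
    exact this.mono_left nhdsWithin_le_nhds
  refine ge_of_tendsto hl ?_
  filter_upwards [self_mem_nhdsWithin] with ε hε
  exact key ε hε

lemma sq_key {a b s : ℝ} (h1 : s ≤ a) (h2 : b ≤ s) : (s - 1) ^ 2 ≤ (a - 1) ^ 2 + (b - 1) ^ 2 := by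
  rcases le_total s 1 with h3 | h3
  · have : (1 - s) ^ 2 ≤ (1 - b) ^ 2 := pow_le_pow_left₀ (by linarith) (by linarith) 2
    nlinarith [sq_nonneg (a - 1)]
  · have : (s - 1) ^ 2 ≤ (a - 1) ^ 2 := pow_le_pow_left₀ (by linarith) (by linarith) 2
    nlinarith [sq_nonneg (b - 1)]

lemma rr_cov (θ h : ℝ) (hh : 0 < h) (j k : ℕ) :
    (rexp (-θ * |(k : ℝ) * h - j * h|) - rexp (-θ * ((k : ℝ) * h + j * h))) / (2 * θ)
      = rr (rexp (-(θ * h))) j k / (2 * θ) := by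
  congr 1
  unfold rr
  rw [← Real.exp_nat_mul, ← Real.exp_nat_mul]
  congr 2
  · have : |(k : ℝ) * h - j * h| = (nd j k : ℝ) * h := by
      unfold nd
      rcases le_total j k with hjk | hjk
      · have : (j : ℝ) ≤ k := by exact_mod_cast hjk
        rw [abs_of_nonneg (by nlinarith), Nat.sub_eq_zero_of_le hjk, zero_add, Nat.cast_sub hjk]
        ring
      · have : (k : ℝ) ≤ j := by exact_mod_cast hjk
        rw [abs_of_nonpos (by nlinarith), Nat.sub_eq_zero_of_le hjk, add_zero, Nat.cast_sub hjk]
        ring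
    rw [this]; ring
  · push_cast; ring

lemma ou_gvec [IsProbabilityMeasure (ℙ : Measure Ω)] {θ : ℝ} {X : Fin 2 → ℝ → Ω → ℝ}
    (hX : IsOUPair θ X) (i : Fin 2) (n : ℕ) (h : ℝ) (hh : 0 < h) :
    GVec (n := n) ℙ (fun j => X i ((j : ℕ) * h)) :=
  ⟨fun j => hX.meas i _, fun c => hX.gaussian i n (fun j => (j : ℕ) * h) c (fun j => by positivity)⟩

/-- Discretised version of the bound. -/
lemma ou_discrete [IsProbabilityMeasure (ℙ : Measure Ω)] {θ : ℝ} (hθ : 0 < θ)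
    {X : Fin 2 → ℝ → Ω → ℝ} (hX : IsOUPair θ X) (T : ℝ) (hT : 0 < T) (n : ℕ) (z : ℝ) :
    |(ℙ {ω : Ω | 2 * θ * √θ * (1 / √T) * (T / (n + 1 : ℝ)) *
        ∑ j : Fin (n + 1), X 0 ((j : ℕ) * (T / (n + 1 : ℝ))) ω *
          X 1 ((j : ℕ) * (T / (n + 1 : ℝ))) ω ≤ z}).toReal
      - (gaussianReal 0 1 (Set.Iic z)).toReal| ≤ 1.1 * √(bnd (θ * T) (θ * T / (n + 1 : ℝ))) := by
  set h := T / (n + 1 : ℝ) with hdef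
  have hh : 0 < h := by positivity
  have hnT : T = (n + 1 : ℝ) * h := by rw [hdef]; field_simp
  have hx : θ * T / (n + 1 : ℝ) = θ * h := by rw [hdef]; ring
  set q := rexp (-(θ * h)) with hq
  have hq0 : 0 < q := Real.exp_pos _
  have hq1 : q < 1 := by
    rw [hq, Real.exp_lt_one_iff]
    have : 0 < θ * h := by positivity
    linarith
  set κ := 2 * θ * √θ * (1 / √T) * h with hκ
  have hκ2 : κ ^ 2 = 4 * θ ^ 3 * h ^ 2 / T := by
    rw [hκ]
    have a : √θ ^ 2 = θ := Real.sq_sqrt hθ.le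
    have b : √T ^ 2 = T := Real.sq_sqrt hT.le
    calc _ = 4 * θ ^ 2 * √θ ^ 2 * h ^ 2 / √T ^ 2 := by ring
      _ = _ := by rw [a, b]; ring
  let r : Fin (n + 1) → Fin (n + 1) → ℝ := fun j k => rr q j k / (2 * θ)
  have hr (i : Fin 2) (j k : Fin (n + 1)) :
      ∫ ω, X i ((j : ℕ) * h) ω * X i ((k : ℕ) * h) ω ∂ℙ = r j k := by
    rw [hX.cov i _ _ (by positivity) (by positivity), rr_cov θ h hh]
  have hind : IndepFun (fun ω (j : Fin (n + 1)) => X 0 ((j : ℕ) * h) ω)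
      (fun ω (j : Fin (n + 1)) => X 1 ((j : ℕ) * h) ω) ℙ := by
    have hm : Measurable (fun (f : ℝ → ℝ) (j : Fin (n + 1)) => f ((j : ℕ) * h)) :=
      measurable_pi_lambda _ fun j => measurable_pi_apply _
    exact hX.indep.comp hm hm
  have hr0 : ∀ j k, 0 ≤ r j k := fun j k => div_nonneg (rr_nonneg hq0 hq1 _ _) (by positivity)
  have hM : ∀ j k, r j k ≤ 1 / (2 * θ) := fun j k => by
    have := rr_le_one hq0 hq1 j k
    simp only [r]; gcongr
  have hR : ∀ j, ∑ k, r j k ≤ (1 + q) / (1 - q) / (2 * θ) := fun j => by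
    simp only [r]
    rw [← Finset.sum_div, Fin.sum_univ_eq_sum_range (fun k => rr q j k) (n + 1)]
    have := rr_row_le hq0 hq1 j.2
    gcongr
  have hquad := (ou_gvec hX 1 (n + 1) h hh).quad r (hr 1) _ _ (κ ^ 2) hr0 hM hR
  refine (cond_cmp (ou_gvec hX 0 (n + 1) h hh) (fun j => hX.meas 1 _) r (hr 0) hind κ z
    hquad.1).trans ?_
  gcongr
  refine hquad.2.trans ?_
  have hS : ∑ j, ∑ k, r j k ^ 2
      = (∑ j ∈ range (n + 1), ∑ k ∈ range (n + 1), rr q j k ^ 2) / (4 * θ ^ 2) := by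
    simp only [r, div_pow, ← Finset.sum_div]
    rw [← Fin.sum_univ_eq_sum_range (fun j => ∑ k ∈ range (n + 1), rr q j k ^ 2) (n + 1)]
    simp_rw [← Fin.sum_univ_eq_sum_range (fun k => rr q _ k ^ 2) (n + 1)]
    ring
  rw [hS, hx]
  set S := ∑ j ∈ range (n + 1), ∑ k ∈ range (n + 1), rr q j k ^ 2
  have hU := rr_sq_upper hq0 hq1 (n + 1)
  have hL := rr_sq_lower hq0 hq1 (n + 1)
  have hn1 : (0 : ℝ) < n + 1 := by positivity
  push_cast at hU hL ⊢
  have e1 : κ ^ 2 * (S / (4 * θ ^ 2)) = θ * h / (n + 1) * S := by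
    rw [hκ2, hnT]; field_simp
  have e2 : (κ ^ 2) ^ 2 * (2 * (1 / (2 * θ) * ((n + 1 : ℝ) * ((1 + q) / (1 - q) / (2 * θ)) ^ 3)))
      = 2 * (θ * h * ((1 + q) / (1 - q))) ^ 3 / (θ * T) := by
    generalize (1 + q) / (1 - q) = ρ
    rw [hκ2, hnT]; field_simp; ring
  rw [e1, e2]
  unfold bnd
  rw [← hq]
  have hc : 0 < θ * h / (n + 1) := by positivity
  have hU' := mul_le_mul_of_nonneg_left hU hc.le
  have hL' := mul_le_mul_of_nonneg_left hL hc.le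
  have f1 : θ * h / (n + 1) * ((n + 1) * ((1 + q ^ 2) / (1 - q ^ 2)))
      = θ * h * ((1 + q ^ 2) / (1 - q ^ 2)) := by
    generalize (1 + q ^ 2) / (1 - q ^ 2) = ρ
    field_simp
  have f2 : θ * h / (n + 1) = (θ * h) ^ 2 / (θ * T) := by
    rw [hnT]; field_simp
  rw [f1] at hU'
  rw [sub_sub, mul_sub, f1, f2] at hL'
  rw [← f2] at hL'
  rw [f2] at hL'
  rw [f2] at hU' ⊢
  have := sq_key hU' hL'
  gcongr

lemma ou_tendsto [IsProbabilityMeasure (ℙ : Measure Ω)] {θ : ℝ}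
    {X : Fin 2 → ℝ → Ω → ℝ} (hX : IsOUPair θ X) (T : ℝ) (hT : 0 < T) :
    ∀ᵐ ω ∂(ℙ : Measure Ω), Tendsto (fun n : ℕ => 2 * θ * √θ * (1 / √T) * (T / (n + 1 : ℝ)) *
        ∑ j : Fin (n + 1), X 0 ((j : ℕ) * (T / (n + 1 : ℝ))) ω *
          X 1 ((j : ℕ) * (T / (n + 1 : ℝ))) ω) atTop (𝓝 (2 * θ * √θ * ouF X T ω)) := by
  filter_upwards [hX.cont] with ω hω
  have hc : ContinuousOn (fun t => X 0 t ω * X 1 t ω) (Set.Icc 0 T) :=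
    ((hω 0).mul (hω 1)).mono Set.Icc_subset_Ici_self
  have := (riemann _ T hT hc).const_mul (2 * θ * √θ * (1 / √T))
  have e : 2 * θ * √θ * ouF X T ω
      = 2 * θ * √θ * (1 / √T) * ∫ u in (0:ℝ)..T, X 0 u ω * X 1 u ω := by
    unfold ouF; ring
  rw [e]
  refine this.congr fun n => ?_
  rw [Fin.sum_univ_eq_sum_range
    (fun j => X 0 (j * (T / (n + 1 : ℝ))) ω * X 1 (j * (T / (n + 1 : ℝ))) ω) (n + 1)]
  ring

lemma ou_disc_meas [IsProbabilityMeasure (ℙ : Measure Ω)] {θ : ℝ}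
    {X : Fin 2 → ℝ → Ω → ℝ} (hX : IsOUPair θ X) (T : ℝ) (n : ℕ) :
    Measurable (fun ω => 2 * θ * √θ * (1 / √T) * (T / (n + 1 : ℝ)) *
        ∑ j : Fin (n + 1), X 0 ((j : ℕ) * (T / (n + 1 : ℝ))) ω *
          X 1 ((j : ℕ) * (T / (n + 1 : ℝ))) ω) := by
  have := hX.meas
  fun_prop

lemma ou_aemeas [IsProbabilityMeasure (ℙ : Measure Ω)] {θ : ℝ}
    {X : Fin 2 → ℝ → Ω → ℝ} (hX : IsOUPair θ X) (T : ℝ) (hT : 0 < T) :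
    AEMeasurable (fun ω => 2 * θ * √θ * ouF X T ω) (ℙ : Measure Ω) :=
  aemeasurable_of_tendsto_metrizable_ae atTop
    (fun n => (ou_disc_meas hX T n).aemeasurable) (ou_tendsto hX T hT)

lemma ou_pt [IsProbabilityMeasure (ℙ : Measure Ω)] {θ : ℝ} (hθ : 0 < θ)
    {X : Fin 2 → ℝ → Ω → ℝ} (hX : IsOUPair θ X) (T : ℝ) (hT : 0 < T) (z : ℝ) :
    |(ℙ {ω : Ω | 2 * θ * √θ * ouF X T ω ≤ z}).toReal - (gaussianReal 0 1 (Set.Iic z)).toReal|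
      ≤ 1.1 * √(25 / 4 / (θ * T) ^ 2 + 16 / (θ * T)) := by
  have hτ : 0 < θ * T := by positivity
  refine kol_limit _ _ (ou_disc_meas hX T) (ou_tendsto hX T hT)
    (fun n => 1.1 * √(bnd (θ * T) (θ * T / (n + 1 : ℝ)))) _ ?_
    (fun n z => ou_discrete hθ hX T hT n z) z
  refine Tendsto.const_mul _ (Tendsto.sqrt ((lim_bnd (θ * T) hτ).comp ?_))
  refine tendsto_nhdsWithin_iff.2 ⟨?_, ?_⟩
  · have := (tendsto_one_div_add_atTop_nhds_zero_nat (𝕜 := ℝ)).const_mul (θ * T)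
    simpa [div_eq_mul_inv] using this
  · filter_upwards with n
    simp only [Set.mem_Ioi]; positivity

lemma ou_bound [IsProbabilityMeasure (ℙ : Measure Ω)] {θ : ℝ} (hθ : 0 < θ)
    {X : Fin 2 → ℝ → Ω → ℝ} (hX : IsOUPair θ X) (T : ℝ) (hT : 1 ≤ T) :
    dKol (Measure.map (fun ω => 2 * θ * Real.sqrt θ * ouF X T ω) ℙ) (gaussianReal 0 1)
        ≤ Real.sqrt ((2 + 7 / (4 * θ)) ^ 2 + 27 / (4 * θ)) / Real.sqrt T := by
  have hT0 : 0 < T := by linarith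
  have hae := ou_aemeas hX T hT0
  have hprob : IsProbabilityMeasure (Measure.map (fun ω => 2 * θ * √θ * ouF X T ω) ℙ) :=
    Measure.isProbabilityMeasure_map hae
  unfold dKol
  refine Real.iSup_le (fun z => ?_) (by positivity)
  set C := (2 + 7 / (4 * θ)) ^ 2 + 27 / (4 * θ) with hC
  have hC0 : 0 ≤ C := by positivity
  rw [← Real.sqrt_div hC0]
  rcases le_or_gt 1 (C / T) with h1 | h1
  · exact (abs_sub_prob_le _ _ _ _).trans (Real.one_le_sqrt.2 h1)
  have hCT : C < T := by rwa [div_lt_one hT0] at h1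
  have hθC : 20.75 ≤ θ * C := by
    have e : θ * C = 4 * θ + 49 / 16 / θ + 13.75 := by
      rw [hC]; field_simp; ring
    have : 7 ≤ 4 * θ + 49 / 16 / θ := by
      have : 4 * θ + 49 / 16 / θ - 7 = (2 * θ - 7 / 4) ^ 2 / θ := by field_simp; ring
      have h2 : 0 ≤ (2 * θ - 7 / 4) ^ 2 / θ := by positivity
      linarith
    rw [e]; linarith
  have hτC : 20.75 ≤ θ * T := hθC.trans (by gcongr)
  have hz := ou_pt hθ hX T hT0 z
  rw [Measure.map_apply_of_aemeasurable hae measurableSet_Iic]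
  refine le_trans hz ?_
  apply Real.le_sqrt_of_sq_le
  rw [mul_pow, Real.sq_sqrt (by positivity)]
  have e : C / T = θ * C / (θ * T) := by field_simp
  rw [e]
  set τ := θ * T
  have hτ : 0 < τ := by positivity
  rw [le_div_iff₀ hτ]
  have : (1.1 ^ 2 * (25 / 4 / τ ^ 2 + 16 / τ)) * τ = 1.1 ^ 2 * (25 / 4 / τ + 16) := by
    field_simp
  rw [this]
  have : 25 / 4 / τ ≤ 25 / 4 / 20.75 := by gcongr
  norm_num at this hθC ⊢
  linarith

lemma ou_rescale [IsProbabilityMeasure (ℙ : Measure Ω)] {θ : ℝ} (hθ : 0 < θ)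
    {X : Fin 2 → ℝ → Ω → ℝ} (hX : IsOUPair θ X) (T : ℝ) (hT : 0 < T) :
    dKol (Measure.map (ouF X T) ℙ) (gaussianReal 0 (Real.toNNReal (1 / (4 * θ ^ 3)))) =
    dKol (Measure.map (fun ω => 2 * θ * Real.sqrt θ * ouF X T ω) ℙ) (gaussianReal 0 1) := by
  set a := 2 * θ * √θ with ha
  have ha0 : 0 < a := by positivity
  have hae : AEMeasurable (fun ω => a * ouF X T ω) ℙ := ou_aemeas hX T hT
  have hae' : AEMeasurable (ouF X T) ℙ := by
    have := hae.const_mul a⁻¹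
    refine this.congr (Eventually.of_forall fun ω => ?_)
    simp only
    field_simp
  have hpos : 0 < 1 / (4 * θ ^ 3) := by positivity
  have hs : √((Real.toNNReal (1 / (4 * θ ^ 3)) : ℝ≥0) : ℝ) = 1 / a := by
    rw [Real.coe_toNNReal _ hpos.le]
    rw [Real.sqrt_eq_iff_mul_self_eq hpos.le (by positivity)]
    have : a * a = 4 * θ ^ 3 := by
      rw [ha]
      have := Real.mul_self_sqrt hθ.le
      calc _ = 4 * θ ^ 2 * (√θ * √θ) := by ring
        _ = _ := by rw [this]; ring
    rw [← this]; field_simp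
  unfold dKol
  let e : ℝ ≃ ℝ := Equiv.mulLeft₀ a ha0.ne'
  refine e.iSup_congr fun z => ?_
  have hez : e z = a * z := rfl
  rw [hez, gaussian_scale_Iic (Real.toNNReal (1 / (4 * θ ^ 3))) (Real.toNNReal_pos.2 hpos).ne', hs,
    Measure.map_apply_of_aemeasurable hae measurableSet_Iic,
    Measure.map_apply_of_aemeasurable hae' measurableSet_Iic]
  have e1 : z / (1 / a) = a * z := by field_simp
  have e2 : (fun ω => a * ouF X T ω) ⁻¹' Set.Iic (a * z) = ouF X T ⁻¹' Set.Iic z := by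
    ext ω
    simp [mul_le_mul_iff_right₀ ha0]
  rw [e1, e2]

/-- `d_Kol(2θ^{3/2}F_T, N(0,1)) ≤ c(θ)/√T` for `T ≥ 1`, with
`c(θ) = √((2+7/(4θ))² + 27/(4θ))`; consequently `F_T ⇒ N(0, 1/(4θ³))`. -/
theorem stmt_1 (θ : ℝ) (hθ : 0 < θ) [IsProbabilityMeasure (ℙ : Measure Ω)]
    (X : Fin 2 → ℝ → Ω → ℝ) (hX : IsOUPair θ X) :
    (∀ T : ℝ, 1 ≤ T →
      dKol (Measure.map (fun ω => 2 * θ * Real.sqrt θ * ouF X T ω) ℙ) (gaussianReal 0 1)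
        ≤ Real.sqrt ((2 + 7 / (4 * θ)) ^ 2 + 27 / (4 * θ)) / Real.sqrt T) ∧
    Tendsto (fun T : ℝ =>
        dKol (Measure.map (ouF X T) ℙ) (gaussianReal 0 (Real.toNNReal (1 / (4 * θ ^ 3)))))
      atTop (𝓝 0) := by
  have hb := fun T hT => ou_bound hθ hX T hT
  refine ⟨hb, ?_⟩
  have hl : Tendsto (fun T : ℝ => Real.sqrt ((2 + 7 / (4 * θ)) ^ 2 + 27 / (4 * θ)) / Real.sqrt T)
      atTop (𝓝 0) := Tendsto.const_div_atTop Real.tendsto_sqrt_atTop _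
  refine squeeze_zero' ?_ ?_ hl
  · exact Eventually.of_forall fun T => Real.iSup_nonneg fun z => abs_nonneg _
  · filter_upwards [eventually_ge_atTop 1] with T hT
    rw [ou_rescale hθ hX T (by linarith)]
    exact hb T hT

end
end

section
/- Let X and Z be real random variables defined on a common probability space with P(Z > 0) = 1, and let N have the standard Gaussian law N(0,1). Then for every ε > 0, d_Kol(X/Z, N) ≤ d_Kol(X, N) + P(|Z − 1| > ε) + ε. -/
open MeasureTheory ProbabilityTheory Real Filter Finset
open scoped Topology ENNReal NNReal

noncomputable section

variable {Ω : Type} [MeasureSpace Ω]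

lemma aux_half_pos : ((gaussianReal 0 1) (Set.Ioi (0:ℝ))).toReal ≤ 1/2 ∧
    ((gaussianReal 0 1) (Set.Iic (0:ℝ))).toReal ≤ 1/2 := by
  have : NullSingletonClass (gaussianReal 0 1) := nullSingletonClass_gaussianReal (by norm_num)
  have h1 : (gaussianReal 0 1) (Set.Ioi (0:ℝ)) = (gaussianReal 0 1) (Set.Iic (0:ℝ)) := by
    have h := gaussianReal_map_neg (μ := 0) (v := 1)
    rw [neg_zero] at h
    conv_lhs => rw [← h]
    rw [Measure.map_apply measurable_neg measurableSet_Ioi, ← measure_congr Iio_ae_eq_Iic]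
    congr 1
    ext x
    simp
  have h2 : ((gaussianReal 0 1) (Set.Ioi (0:ℝ))).toReal
      + ((gaussianReal 0 1) (Set.Iic (0:ℝ))).toReal = 1 := by
    have := prob_add_prob_compl (μ := gaussianReal 0 1) (measurableSet_Ioi (a := (0:ℝ)))
    rw [Set.compl_Ioi] at this
    rw [← ENNReal.toReal_add (measure_ne_top _ _) (measure_ne_top _ _), this]
    simp
  rw [h1] at h2 ⊢
  constructor <;> linarith

lemma aux_pdf_bound (c : ℝ) (x : ℝ) (hc : 0 ≤ c) (hx : c ≤ |x|) :
    c * gaussianPDFReal 0 1 x ≤ 1/2 := by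
  have h1 : gaussianPDFReal 0 1 x = (√(2 * π))⁻¹ * Real.exp (-(x^2) / 2) := by
    simp [gaussianPDFReal]
  have h2 : 2 ≤ √(2 * π) := by
    apply Real.le_sqrt_of_sq_le
    nlinarith [Real.pi_gt_three]
  have h3 : c * Real.exp (-(x^2)/2) ≤ 1 := by
    have := Real.add_one_le_exp (x^2/2)
    have h4 : c ≤ Real.exp (x^2/2) := by nlinarith [sq_abs x, sq_nonneg (|x| - 1)]
    rw [show -(x^2)/2 = -(x^2/2) by ring, Real.exp_neg]
    exact mul_inv_le_one_of_le₀ h4 (by positivity)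
  have h5 : (√(2 * π))⁻¹ ≤ 1/2 := by
    rw [one_div]; exact inv_anti₀ (by norm_num) h2
  have h6 : 0 ≤ c * Real.exp (-(x^2)/2) := by positivity
  rw [h1]
  calc c * ((√(2 * π))⁻¹ * Real.exp (-(x^2) / 2)) 
      = (√(2 * π))⁻¹ * (c * Real.exp (-(x^2) / 2)) := by ring
    _ ≤ 1/2 * 1 := by gcongr
    _ = 1/2 := by ring

lemma aux_Ioc (a b c ε : ℝ) (hε : 0 ≤ ε) (hc : 0 ≤ c) (hab : a ≤ b)
    (hcx : ∀ x ∈ Set.Ioc a b, c ≤ |x|) (h : b - a ≤ 2 * ε * c) :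
    ((gaussianReal 0 1) (Set.Ioc a b)).toReal ≤ ε := by
  rcases hc.eq_or_lt with rfl | hc
  · have : Set.Ioc a b = ∅ := Set.Ioc_eq_empty (by linarith)
    simp [this, hε]
  have h1 : (gaussianReal 0 1) (Set.Ioc a b) ≤ ENNReal.ofReal (1/(2*c)) * ENNReal.ofReal (b - a) := by
    rw [gaussianReal_apply 0 one_ne_zero, ← Real.volume_Ioc, ← setLIntegral_const]
    apply setLIntegral_mono' measurableSet_Ioc
    intro x hx
    apply ENNReal.ofReal_le_ofReal
    have := aux_pdf_bound c x hc.le (hcx x hx)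
    rw [le_div_iff₀ (by positivity)]
    linarith
  rw [← ENNReal.ofReal_mul (by positivity)] at h1
  apply ENNReal.toReal_le_of_le_ofReal hε (h1.trans (ENNReal.ofReal_le_ofReal _))
  rw [div_mul_eq_mul_div, div_le_iff₀ (by positivity)]
  linarith

lemma aux_diff (a b : ℝ) (hab : a ≤ b) :
    ((gaussianReal 0 1) (Set.Iic b)).toReal - ((gaussianReal 0 1) (Set.Iic a)).toReal
      = ((gaussianReal 0 1) (Set.Ioc a b)).toReal := by
  rw [← Set.Iic_union_Ioc_eq_Iic hab, measure_union _ measurableSet_Ioc,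
    ENNReal.toReal_add (measure_ne_top _ _) (measure_ne_top _ _)]
  · ring
  · exact Set.Iic_disjoint_Ioc le_rfl

lemma aux_shift (z ε : ℝ) (hε : 0 < ε) (hε1 : ε < 1) :
    ((gaussianReal 0 1) (Set.Iic (z + |z| * ε))).toReal
        - ((gaussianReal 0 1) (Set.Iic z)).toReal ≤ ε ∧
    ((gaussianReal 0 1) (Set.Iic z)).toReal
        - ((gaussianReal 0 1) (Set.Iic (z - |z| * ε))).toReal ≤ ε := by
  have hz : 0 ≤ |z| * ε := by positivity
  rw [aux_diff _ _ (by linarith), aux_diff _ _ (by linarith)]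
  obtain ⟨hp, hn⟩ := aux_half_pos
  have mono : ∀ s t : Set ℝ, s ⊆ t → ((gaussianReal 0 1) s).toReal ≤ ((gaussianReal 0 1) t).toReal :=
    fun s t h => ENNReal.toReal_mono (measure_ne_top _ _) (measure_mono h)
  rcases le_or_gt (1/2) ε with h2 | h2
  · rcases le_total 0 z with h0 | h0
    · rw [abs_of_nonneg h0] at *
      constructor
      · refine (mono _ (Set.Ioi 0) fun x hx => ?_).trans (hp.trans h2)
        exact lt_of_le_of_lt h0 hx.1
      · refine (mono _ (Set.Ioi 0) fun x hx => ?_).trans (hp.trans h2)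
        exact lt_of_le_of_lt (by nlinarith) hx.1
    · rw [abs_of_nonpos h0] at *
      constructor
      · refine (mono _ (Set.Iic 0) fun x hx => ?_).trans (hn.trans h2)
        exact hx.2.trans (by nlinarith)
      · refine (mono _ (Set.Iic 0) fun x hx => ?_).trans (hn.trans h2)
        exact hx.2.trans h0
  · have key : ∀ a b : ℝ, a ≤ b → b - a ≤ |z| * ε → 
        (∀ x ∈ Set.Ioc a b, |z| * (1 - ε) ≤ |x|) → 
        ((gaussianReal 0 1) (Set.Ioc a b)).toReal ≤ ε := by
      intro a b hab h hx
      refine aux_Ioc a b (|z| * (1-ε)) ε hε.le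
        (mul_nonneg (abs_nonneg _) (by linarith)) hab hx ?_
      nlinarith [mul_nonneg hz (by linarith : 0 ≤ 1 - 2 * ε)]
    constructor
    · refine key _ _ (by linarith) (by linarith) fun x hx => ?_
      have := abs_sub_abs_le_abs_sub z x
      have : |z - x| ≤ |z| * ε := abs_le.2 ⟨by linarith [hx.2], by linarith [hx.1]⟩
      linarith
    · refine key _ _ (by linarith) (by linarith) fun x hx => ?_
      have := abs_sub_abs_le_abs_sub z x
      have : |z - x| ≤ |z| * ε := abs_le.2 ⟨by linarith [hx.2], by linarith [hx.1]⟩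
      linarith

lemma aux_abs_le_one (μ ν : Measure ℝ) [IsProbabilityMeasure μ] [IsProbabilityMeasure ν] (z : ℝ) :
    |(μ (Set.Iic z)).toReal - (ν (Set.Iic z)).toReal| ≤ 1 := by
  have h1 : (μ (Set.Iic z)).toReal ≤ 1 := ENNReal.toReal_le_of_le_ofReal one_pos.le (by simpa using prob_le_one)
  have h2 : (ν (Set.Iic z)).toReal ≤ 1 := ENNReal.toReal_le_of_le_ofReal one_pos.le (by simpa using prob_le_one)
  have h3 := ENNReal.toReal_nonneg (a := μ (Set.Iic z))
  have h4 := ENNReal.toReal_nonneg (a := ν (Set.Iic z))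
  exact abs_le.2 ⟨by linarith, by linarith⟩

/-- Michel–Pfanzagl, ratio form: if `P(Z > 0) = 1` then
`d_Kol(X/Z, N(0,1)) ≤ d_Kol(X, N(0,1)) + P(|Z−1| > ε) + ε` for every `ε > 0`. -/
theorem stmt_3 {Ω' : Type} [MeasureSpace Ω'] [IsProbabilityMeasure (ℙ : Measure Ω')]
    (X Z : Ω' → ℝ) (hX : Measurable X) (hZ : Measurable Z)
    (hZpos : (ℙ {ω | 0 < Z ω}) = 1) (ε : ℝ) (hε : 0 < ε) :
    dKol (Measure.map (fun ω => X ω / Z ω) ℙ) (gaussianReal 0 1)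
      ≤ dKol (Measure.map X ℙ) (gaussianReal 0 1)
        + (ℙ {ω | ε < |Z ω - 1|}).toReal + ε := by
  have : IsProbabilityMeasure (Measure.map X ℙ) := Measure.isProbabilityMeasure_map hX.aemeasurable
  have hXZ : Measurable (fun ω => X ω / Z ω) := hX.div hZ
  have : IsProbabilityMeasure (Measure.map (fun ω => X ω / Z ω) ℙ) :=
    Measure.isProbabilityMeasure_map hXZ.aemeasurable
  have hd : ∀ z, |((Measure.map X ℙ) (Set.Iic z)).toReal - ((gaussianReal 0 1) (Set.Iic z)).toReal|
      ≤ dKol (Measure.map X ℙ) (gaussianReal 0 1) := fun z =>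
    le_ciSup (f := fun z => |((Measure.map X ℙ) (Set.Iic z)).toReal
      - ((gaussianReal 0 1) (Set.Iic z)).toReal|)
      ⟨1, by rintro _ ⟨y, rfl⟩; exact aux_abs_le_one _ _ y⟩ z
  have hd0 : 0 ≤ dKol (Measure.map X ℙ) (gaussianReal 0 1) := (abs_nonneg _).trans (hd 0)
  have hb0 := ENNReal.toReal_nonneg (a := ℙ {ω : Ω' | ε < |Z ω - 1|})
  refine ciSup_le fun z => ?_
  rcases le_or_gt 1 ε with h1 | h1
  · have := aux_abs_le_one (Measure.map (fun ω => X ω / Z ω) ℙ) (gaussianReal 0 1) z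
    linarith
  obtain ⟨hu, hl⟩ := aux_shift z ε hε h1
  have hdu := abs_le.1 (hd (z + |z| * ε))
  have hdl := abs_le.1 (hd (z - |z| * ε))
  have hpos : ∀ᵐ ω ∂(ℙ : Measure Ω'), 0 < Z ω :=
    (prob_compl_eq_zero_iff (measurableSet_lt measurable_const hZ)).2 hZpos
  rw [Measure.map_apply hX measurableSet_Iic] at hdu hdl
  rw [Measure.map_apply hXZ measurableSet_Iic]
  have hle : ∀ s t : Set Ω', (∀ᵐ ω ∂(ℙ : Measure Ω'), ω ∈ s → ω ∈ t ∪ {ω | ε < |Z ω - 1|}) →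
      (ℙ s).toReal ≤ (ℙ t).toReal + (ℙ {ω : Ω' | ε < |Z ω - 1|}).toReal := by
    intro s t h
    rw [← ENNReal.toReal_add (measure_ne_top _ _) (measure_ne_top _ _)]
    exact ENNReal.toReal_mono (by finiteness) ((measure_mono_ae h).trans (measure_union_le _ _))
  have A := hle ((fun ω => X ω / Z ω) ⁻¹' Set.Iic z) (X ⁻¹' Set.Iic (z + |z| * ε)) (by
    filter_upwards [hpos] with ω hω h
    by_cases hb : ε < |Z ω - 1|
    · exact Or.inr hb
    left
    have h : X ω / Z ω ≤ z := h
    rw [div_le_iff₀ hω] at h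
    have h' : z * (Z ω - 1) ≤ |z| * ε := (le_abs_self _).trans (by
      rw [abs_mul]; exact mul_le_mul_of_nonneg_left (not_lt.1 hb) (abs_nonneg _))
    change X ω ≤ z + |z| * ε
    linarith)
  have B := hle (X ⁻¹' Set.Iic (z - |z| * ε)) ((fun ω => X ω / Z ω) ⁻¹' Set.Iic z) (by
    filter_upwards [hpos] with ω hω h
    by_cases hb : ε < |Z ω - 1|
    · exact Or.inr hb
    left
    have h : X ω ≤ z - |z| * ε := h
    have h' : -(z * (Z ω - 1)) ≤ |z| * ε := (neg_le_abs _).trans (by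
      rw [abs_mul]; exact mul_le_mul_of_nonneg_left (not_lt.1 hb) (abs_nonneg _))
    change X ω / Z ω ≤ z
    rw [div_le_iff₀ hω]
    linarith)
  exact abs_le.2 ⟨by linarith [hdl.1], by linarith [hdu.2]⟩

end
end

section
/- Let X be a real random variable and let Y = N · N′ be defined on the same probability space, where N ~ N(0, σ₁²) and N′ ~ N(0, σ₂²) are independent centered Gaussian random variables (σ₁, σ₂ > 0). Then for every β with (2√3/3)·σ₁σ₂ < β < 4, d_Kol(X + Y, N(0,1)) ≤ d_Kol(X, N(0,1)) + β(1 + ln(4/β)). -/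
open MeasureTheory ProbabilityTheory Real Filter Finset
open scoped Topology ENNReal NNReal

noncomputable section

variable {Ω : Type} [MeasureSpace Ω]

lemma aux_gauss_sq (v : ℝ≥0) (hv : 0 < v) (a : ℝ) (ha : 2 * a * v ≤ 3 / 4) :
    ∫⁻ x, ENNReal.ofReal (Real.exp (a * x ^ 2)) ∂(gaussianReal 0 v) ≤ 2 := by
  have hv' : (0 : ℝ) < v := by exact_mod_cast hv
  rw [gaussianReal_of_var_ne_zero _ hv.ne',
    lintegral_withDensity_eq_lintegral_mul _ (measurable_gaussianPDF 0 v) (by fun_prop)]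
  set b : ℝ := 1 / (2 * v) - a with hb
  have hbv : 1 / 4 ≤ 2 * v * b := by
    rw [hb]; field_simp; linarith
  have hbpos : 0 < b := by
    by_contra h
    push Not at h
    nlinarith
  have hpt : ∀ x : ℝ, (gaussianPDF 0 v * fun x => ENNReal.ofReal (Real.exp (a * x ^ 2))) x
      = ENNReal.ofReal ((√(2 * π * v))⁻¹ * Real.exp (-b * x ^ 2)) := by
    intro x
    simp only [Pi.mul_apply, gaussianPDF, gaussianPDFReal]
    rw [← ENNReal.ofReal_mul (by positivity), mul_assoc, ← Real.exp_add]
    congr 3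
    rw [hb]; field_simp; ring
  simp_rw [hpt]
  rw [← ofReal_integral_eq_lintegral_ofReal ((integrable_exp_neg_mul_sq hbpos).const_mul _)
    (Eventually.of_forall fun x => by positivity), integral_const_mul, integral_gaussian]
  rw [show (2 : ℝ≥0∞) = ENNReal.ofReal 2 by simp]
  apply ENNReal.ofReal_le_ofReal
  rw [inv_mul_le_iff₀ (by positivity)]
  apply Real.sqrt_le_iff.2
  refine ⟨by positivity, ?_⟩
  rw [mul_pow, Real.sq_sqrt (by positivity), div_le_iff₀ hbpos]
  nlinarith [Real.pi_pos]

lemma aux_lint {Ω' : Type} [MeasureSpace Ω'] [IsProbabilityMeasure (ℙ : Measure Ω')]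
    (σ₁ σ₂ : ℝ) (hσ₁ : 0 < σ₁) (N N' : Ω' → ℝ)
    (hmN : Measurable N) (hmN' : Measurable N')
    (hN : Measure.map N ℙ = gaussianReal 0 (Real.toNNReal (σ₁ ^ 2)))
    (hN' : Measure.map N' ℙ = gaussianReal 0 (Real.toNNReal (σ₂ ^ 2)))
    (hind : IndepFun N N' ℙ) (t : ℝ) (ht : t ^ 2 * (σ₁ * σ₂) ^ 2 ≤ 3 / 4) :
    ∫⁻ ω, ENNReal.ofReal (Real.exp (t * (N ω * N' ω))) ∂(ℙ : Measure Ω') ≤ 2 := by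
  have h1 : ∫⁻ ω, ENNReal.ofReal (Real.exp (t * (N ω * N' ω))) ∂(ℙ : Measure Ω')
      = ∫⁻ p, ENNReal.ofReal (Real.exp (t * (p.1 * p.2)))
        ∂(Measure.map (fun ω => (N ω, N' ω)) (ℙ : Measure Ω')) := by
    rw [lintegral_map (by fun_prop) (by fun_prop)]
  rw [h1, (indepFun_iff_map_prod_eq_prod_map_map hmN.aemeasurable hmN'.aemeasurable).1 hind,
    hN, hN', lintegral_prod _ (by fun_prop)]
  have h2 : ∀ x : ℝ, ∫⁻ y, ENNReal.ofReal (Real.exp (t * (x * y)))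
      ∂(gaussianReal 0 (Real.toNNReal (σ₂ ^ 2)))
      = ENNReal.ofReal (Real.exp ((t ^ 2 * σ₂ ^ 2 / 2) * x ^ 2)) := by
    intro x
    simp_rw [← mul_assoc]
    rw [← ofReal_integral_eq_lintegral_ofReal (integrable_exp_mul_gaussianReal _)
      (Eventually.of_forall fun x => by positivity)]
    congr 1
    have := congrFun (mgf_id_gaussianReal (μ := 0) (v := Real.toNNReal (σ₂ ^ 2))) (t * x)
    simp only [mgf, id] at this
    rw [this, Real.coe_toNNReal _ (by positivity)]
    congr 1
    ring
  simp_rw [h2]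
  apply aux_gauss_sq
  · simp; positivity
  · rw [Real.coe_toNNReal _ (by positivity)]
    linarith

lemma aux_tail {Ω' : Type} [MeasureSpace Ω'] [IsProbabilityMeasure (ℙ : Measure Ω')]
    (Y : Ω' → ℝ) (hY : Measurable Y) (β : ℝ) (hβ : 0 < β)
    (h : ∫⁻ ω, ENNReal.ofReal (Real.exp (β⁻¹ * Y ω)) ∂(ℙ : Measure Ω') ≤ 2) :
    (ℙ : Measure Ω').real {ω | β * Real.log (4 / β) ≤ Y ω} ≤ β / 2 := by
  have h1 := mul_meas_ge_le_lintegral (μ := (ℙ : Measure Ω'))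
    (f := fun ω => ENNReal.ofReal (Real.exp (β⁻¹ * Y ω))) (by fun_prop) (ENNReal.ofReal (4 / β))
  have h2 : {ω | β * Real.log (4 / β) ≤ Y ω}
      ⊆ {ω | ENNReal.ofReal (4 / β) ≤ ENNReal.ofReal (Real.exp (β⁻¹ * Y ω))} := by
    intro ω hω
    simp only [Set.mem_setOf_eq] at hω ⊢
    apply ENNReal.ofReal_le_ofReal
    rw [← Real.log_le_iff_le_exp (by positivity), inv_mul_eq_div, le_div_iff₀ hβ]
    linarith
  have h3 : ENNReal.ofReal (4 / β) * (ℙ : Measure Ω') {ω | β * Real.log (4 / β) ≤ Y ω} ≤ 2 :=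
    (mul_le_mul_right (measure_mono h2) _).trans (h1.trans h)
  have h4 := ENNReal.toReal_mono (by simp) h3
  rw [ENNReal.toReal_mul, ENNReal.toReal_ofReal (by positivity)] at h4
  simp only [ENNReal.toReal_ofNat] at h4
  change 4 / β * (ℙ : Measure Ω').real _ ≤ 2 at h4
  rw [div_mul_eq_mul_div, div_le_iff₀ hβ] at h4
  linarith

lemma aux_interval (z ε : ℝ) (hε : 0 ≤ ε) :
    (gaussianReal 0 1 (Set.Iic (z + ε))).toReal ≤ (gaussianReal 0 1 (Set.Iic z)).toReal + ε := by
  have h1 : gaussianReal 0 1 (Set.Ioc z (z + ε)) ≤ ENNReal.ofReal ε := by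
    rw [gaussianReal_apply _ (by simp)]
    calc ∫⁻ x in Set.Ioc z (z + ε), gaussianPDF 0 1 x
        ≤ ∫⁻ x in Set.Ioc z (z + ε), 1 := by
          apply lintegral_mono
          intro x
          simp only [gaussianPDF, gaussianPDFReal]
          rw [← ENNReal.ofReal_one]
          apply ENNReal.ofReal_le_ofReal
          apply mul_le_one₀
          · apply inv_le_one_of_one_le₀
            apply Real.one_le_sqrt.2
            simp only [NNReal.coe_one, mul_one]
            linarith [Real.pi_gt_three]
          · positivity
          · apply Real.exp_le_one_iff.2
            rw [neg_div]
            apply neg_nonpos.2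
            positivity
      _ = ENNReal.ofReal ε := by simp
  have h2 : Set.Iic (z + ε) = Set.Iic z ∪ Set.Ioc z (z + ε) :=
    (Set.Iic_union_Ioc_eq_Iic (by linarith)).symm
  have h3 : (gaussianReal 0 1).real (Set.Iic (z + ε))
      ≤ (gaussianReal 0 1).real (Set.Iic z) + (gaussianReal 0 1).real (Set.Ioc z (z + ε)) := by
    rw [h2]; exact measureReal_union_le _ _
  have h4 : (gaussianReal 0 1).real (Set.Ioc z (z + ε)) ≤ ε :=
    ENNReal.toReal_le_of_le_ofReal hε h1
  change (gaussianReal 0 1).real _ ≤ (gaussianReal 0 1).real _ + ε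
  linarith

lemma aux_le_dKol (μ ν : Measure ℝ) [IsProbabilityMeasure μ] [IsProbabilityMeasure ν] (z : ℝ) :
    |(μ (Set.Iic z)).toReal - (ν (Set.Iic z)).toReal| ≤ dKol μ ν := by
  apply le_ciSup (f := fun z : ℝ => |(μ (Set.Iic z)).toReal - (ν (Set.Iic z)).toReal|)
  refine ⟨1, ?_⟩
  rintro _ ⟨w, rfl⟩
  have a1 : μ.real (Set.Iic w) ≤ 1 := measureReal_le_one
  have a2 : ν.real (Set.Iic w) ≤ 1 := measureReal_le_one
  have a3 : 0 ≤ μ.real (Set.Iic w) := measureReal_nonneg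
  have a4 : 0 ≤ ν.real (Set.Iic w) := measureReal_nonneg
  change |μ.real _ - ν.real _| ≤ 1
  rw [abs_le]
  constructor <;> linarith

/-- if `Y = N·N'` is a product of independent centered Gaussians with
variances `σ₁², σ₂²`, then for every `β` with `(2√3/3)σ₁σ₂ < β < 4`,
`d_Kol(X+Y, N(0,1)) ≤ d_Kol(X, N(0,1)) + β(1 + ln(4/β))`. -/
theorem stmt_5 {Ω' : Type} [MeasureSpace Ω'] [IsProbabilityMeasure (ℙ : Measure Ω')]
    (σ₁ σ₂ : ℝ) (hσ₁ : 0 < σ₁) (hσ₂ : 0 < σ₂) (X N N' : Ω' → ℝ)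
    (hmX : Measurable X) (hmN : Measurable N) (hmN' : Measurable N')
    (hN : Measure.map N ℙ = gaussianReal 0 (Real.toNNReal (σ₁ ^ 2)))
    (hN' : Measure.map N' ℙ = gaussianReal 0 (Real.toNNReal (σ₂ ^ 2)))
    (hind : IndepFun N N' ℙ)
    (β : ℝ) (hβl : 2 * Real.sqrt 3 / 3 * (σ₁ * σ₂) < β) (hβu : β < 4) :
    dKol (Measure.map (fun ω => X ω + N ω * N' ω) ℙ) (gaussianReal 0 1)
      ≤ dKol (Measure.map X ℙ) (gaussianReal 0 1) + β * (1 + Real.log (4 / β)) := by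
  have hs : 0 < σ₁ * σ₂ := mul_pos hσ₁ hσ₂
  have h3 : 0 < Real.sqrt 3 := by positivity
  have h33 : Real.sqrt 3 ^ 2 = 3 := Real.sq_sqrt (by norm_num)
  have hβ : 0 < β := lt_trans (by positivity) hβl
  have hsq : (σ₁ * σ₂) ^ 2 ≤ 3 / 4 * β ^ 2 := by
    have h := pow_le_pow_left₀ (by positivity) hβl.le 2
    have e : (2 * Real.sqrt 3 / 3 * (σ₁ * σ₂)) ^ 2 = 4 / 3 * (σ₁ * σ₂) ^ 2 := by
      rw [mul_pow, div_pow, mul_pow, h33]; norm_num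
    rw [e] at h
    linarith
  have hsq' : (β⁻¹) ^ 2 * (σ₁ * σ₂) ^ 2 ≤ 3 / 4 := by
    rw [inv_pow, inv_mul_le_iff₀ (by positivity)]
    linarith
  set ε : ℝ := β * Real.log (4 / β) with hεdef
  have hε : 0 ≤ ε := by
    apply mul_nonneg hβ.le
    apply Real.log_nonneg
    rw [le_div_iff₀ hβ]; linarith
  have tp : (ℙ : Measure Ω').real {ω | ε ≤ N ω * N' ω} ≤ β / 2 :=
    aux_tail (fun ω => N ω * N' ω) (by fun_prop) β hβ
      (aux_lint σ₁ σ₂ hσ₁ N N' hmN hmN' hN hN' hind β⁻¹ hsq')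
  have tm : (ℙ : Measure Ω').real {ω | ε ≤ -(N ω * N' ω)} ≤ β / 2 := by
    apply aux_tail (fun ω => -(N ω * N' ω)) (by fun_prop) β hβ
    have := aux_lint σ₁ σ₂ hσ₁ N N' hmN hmN' hN hN' hind (-β⁻¹) (by rwa [neg_sq])
    simpa using this
  have hmS : Measurable (fun ω => X ω + N ω * N' ω) := by fun_prop
  have hpX : IsProbabilityMeasure (Measure.map X (ℙ : Measure Ω')) :=
    Measure.isProbabilityMeasure_map hmX.aemeasurable
  have key := aux_le_dKol (Measure.map X (ℙ : Measure Ω')) (gaussianReal 0 1)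
  set D := dKol (Measure.map X (ℙ : Measure Ω')) (gaussianReal 0 1)
  apply ciSup_le
  intro z
  have eX : ∀ w, (Measure.map X (ℙ : Measure Ω') (Set.Iic w)).toReal
      = (ℙ : Measure Ω').real {ω | X ω ≤ w} := fun w => by
    rw [Measure.map_apply hmX measurableSet_Iic]; rfl
  have eS : (Measure.map (fun ω => X ω + N ω * N' ω) (ℙ : Measure Ω') (Set.Iic z)).toReal
      = (ℙ : Measure Ω').real {ω | X ω + N ω * N' ω ≤ z} := by
    rw [Measure.map_apply hmS measurableSet_Iic]; rfl
  rw [eS]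
  simp only [eX] at key
  have k1 := (abs_le.1 (key (z + ε))).2
  have k2 := (abs_le.1 (key (z - ε))).1
  have i1 := aux_interval z ε hε
  have i2 := aux_interval (z - ε) ε hε
  rw [sub_add_cancel] at i2
  have u1 : (ℙ : Measure Ω').real {ω | X ω + N ω * N' ω ≤ z}
      ≤ (ℙ : Measure Ω').real {ω | X ω ≤ z + ε}
        + (ℙ : Measure Ω').real {ω | ε ≤ -(N ω * N' ω)} := by
    refine (measureReal_mono ?_).trans (measureReal_union_le _ _)
    intro ω hω
    simp only [Set.mem_setOf_eq, Set.mem_union] at hω ⊢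
    by_contra! hc
    linarith [hc.1, hc.2]
  have u2 : (ℙ : Measure Ω').real {ω | X ω ≤ z - ε}
      ≤ (ℙ : Measure Ω').real {ω | X ω + N ω * N' ω ≤ z}
        + (ℙ : Measure Ω').real {ω | ε ≤ N ω * N' ω} := by
    refine (measureReal_mono ?_).trans (measureReal_union_le _ _)
    intro ω hω
    simp only [Set.mem_setOf_eq, Set.mem_union] at hω ⊢
    by_contra! hc
    linarith [hc.1, hc.2]
  have e : β * (1 + Real.log (4 / β)) = β + ε := by rw [hεdef]; ring
  rw [e, abs_le]
  constructor <;> linarith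

end
end
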